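/- arXiv:2311.01748 — 3 statements merged into one kernel-verified Lean document; each statement's English description precedes it below -/
import Mathlib

section
/- (Data Processing Inequality for 0 < α < 1.) Let 0 < α < 1 and z ≥ max{α, 1 − α}. Let Ψ be a ℂ-linear map from n×n complex matrices to m×m complex matrices such that Ψ maps positive semidefinite matrices to positive semidefinite matrices and Tr(Ψ(A)) = Tr(A) for all A. Then for all n×n positive semidefinite complex matrices ρ, σ: Q_{α,z}(Ψ(ρ) ‖ Ψ(σ)) ≥ Q_{α,z}(ρ‖σ). -/
open Matrix
open scoped ComplexOrder

/-- Real power of a positive semidefinite matrix via the spectral decomposition,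
applying `x ^ t` (real `rpow`, so with the convention `0 ^ t = 0` for `t ≠ 0`)
to the eigenvalues; returns `0` if the matrix is not Hermitian. -/
noncomputable def mpow {n : Type*} [Fintype n] [DecidableEq n]
    (A : Matrix n n ℂ) (t : ℝ) : Matrix n n ℂ :=
  if hA : A.IsHermitian then
    (hA.eigenvectorUnitary : Matrix n n ℂ) *
      Matrix.diagonal (fun i => ((hA.eigenvalues i ^ t : ℝ) : ℂ)) *
      star (hA.eigenvectorUnitary : Matrix n n ℂ)
  else 0


/-- The α-z-Rényi quantity `Q_{α,z}(ρ‖σ) = Tr((σ^((1−α)/2z) ρ^(α/z) σ^((1−α)/2z))^z)`. -/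
noncomputable def Qaz {n : Type*} [Fintype n] [DecidableEq n]
    (α z : ℝ) (ρ σ : Matrix n n ℂ) : ℝ :=
  ((mpow (mpow σ ((1 - α) / (2 * z)) * mpow ρ (α / z) * mpow σ ((1 - α) / (2 * z))) z).trace).re

/-!
A bounded entire interpolation, to which Hadamard's three lines theorem applies, shows that the
adjoint `Ψ*` contracts the noncommutative `L^p` norms weighted by `ρ` and `Ψ ρ`; for `Ψ = id` the
same argument gives the Araki–Lieb–Thirring inequality. With the Hölder and Young inequalities the
latter yields, for every positive definite `g`, the variational bound
`Q(ρ‖σ) ≤ α Tr (ρ^(α/2z) g ρ^(α/2z))^(z/α) + (1-α) Tr (σ^((1-α)/2z) g⁻¹ σ^((1-α)/2z))^(z/(1-α))`,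
in which equality is attained at an explicit `g`. Apply it with `g = Ψ* a`, where `a` is the
optimal point for `(Ψ ρ, Ψ σ)`: contractivity bounds the first term by the corresponding one for
`(Ψ ρ, Ψ σ)`, and the second term as well after Choi's inequality `(Ψ* a)⁻¹ ≤ Ψ* a⁻¹`. Singular
`ρ`, `σ` and `Ψ` are reached by adding multiples of the identity and passing to the limit.
-/

namespace QuantumRenyi

open scoped Matrix.Norms.L2Operator

section TracePairing

variable {n : Type*} [Fintype n] {A B : Matrix n n ℂ}

open scoped MatrixOrder in
lemma trace_mul_nonneg (hA : A.PosSemidef) (hB : B.PosSemidef) : 0 ≤ (A * B).trace := by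
  classical
  obtain ⟨X, rfl⟩ := CStarAlgebra.nonneg_iff_eq_star_mul_self.1 hA.nonneg
  rw [mul_assoc, trace_mul_comm]
  exact (hB.mul_mul_conjTranspose_same X).trace_nonneg

lemma re_trace_mul_nonneg (hA : A.PosSemidef) (hB : B.PosSemidef) : 0 ≤ (A * B).trace.re :=
  (Complex.le_def.1 (trace_mul_nonneg hA hB)).1

lemma posSemidef_of_trace_mul_nonneg {M : Matrix n n ℂ}
    (h : ∀ X : Matrix n n ℂ, X.PosSemidef → 0 ≤ (M * X).trace) : M.PosSemidef := by
  classical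
  rw [← isPositive_toEuclideanLin_iff, LinearMap.isPositive_iff_complex]
  intro x
  have quad : inner ℂ (toEuclideanLin M x) x =
      star (M * vecMulVec x.ofLp (star x.ofLp)).trace := by
    rw [mul_vecMulVec, trace_vecMulVec, EuclideanSpace.inner_eq_star_dotProduct]
    exact dotProduct_star _ _
  obtain ⟨hre, him⟩ := Complex.le_def.1 (h _ (posSemidef_vecMulVec_self_star x.ofLp))
  rw [quad, Complex.star_def]
  exact ⟨Complex.conj_eq_iff_re.1 (Complex.conj_eq_iff_im.2 (by simp [← him])), hre⟩

lemma norm_trace_mul_mul_le {P : Matrix n n ℂ} (hP : P.PosSemidef) (C D : Matrix n n ℂ) :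
    ‖(P * (C * D)).trace‖ ≤ ((P * (C * Cᴴ)).trace.re + (P * (Dᴴ * D)).trace.re) / 2 := by
  obtain ⟨u, hu, hphase⟩ := Complex.exists_norm_eq_mul_self (P * (C * D)).trace
  have hu' : u * star u = 1 := by
    rw [Complex.star_def, Complex.mul_conj', hu, Complex.ofReal_one, one_pow]
  have square : 0 ≤ (P * ((C - star u • Dᴴ) * (C - star u • Dᴴ)ᴴ)).trace.re :=
    re_trace_mul_nonneg hP (posSemidef_self_mul_conjTranspose _)
  have expand : (C - star u • Dᴴ) * (C - star u • Dᴴ)ᴴ =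
      C * Cᴴ + Dᴴ * D - (u • (C * D) + star u • (C * D)ᴴ) := by
    simp only [conjTranspose_sub, conjTranspose_smul, conjTranspose_conjTranspose, star_star,
      conjTranspose_mul, sub_mul, mul_sub, smul_mul_assoc, mul_smul_comm, smul_sub, smul_smul, hu',
      one_smul]
    abel
  have cross : (P * (C * D)ᴴ).trace = star (P * (C * D)).trace := by
    rw [← trace_conjTranspose, conjTranspose_mul P, hP.1.eq, trace_mul_comm]
  rw [expand, mul_sub, mul_add, mul_add, mul_smul_comm, mul_smul_comm, trace_sub, trace_add,
    trace_add, trace_smul, trace_smul, cross, smul_eq_mul, smul_eq_mul, ← star_mul', ← hphase,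
    Complex.star_def, Complex.conj_ofReal, ← Complex.ofReal_add, Complex.sub_re, Complex.add_re,
    Complex.ofReal_re] at square
  linarith

end TracePairing

section SpectralProjection

variable {n : Type*} [Fintype n] [DecidableEq n] {A : Matrix n n ℂ}

/-- The orthogonal projection onto the eigenspace of the normal matrix `A` for `μ`. -/
noncomputable def spectralProj (A : Matrix n n ℂ) (μ : ℂ) : Matrix n n ℂ :=
  cfc (Pi.single μ 1 : ℂ → ℂ) A

open scoped MatrixOrder in
lemma posSemidef_spectralProj (A : Matrix n n ℂ) (μ : ℂ) : (spectralProj A μ).PosSemidef := by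
  refine Matrix.nonneg_iff_posSemidef.1 (cfc_nonneg fun x _ => ?_)
  by_cases h : x = μ <;> simp [h]

lemma cfc_eq_sum_spectralProj (A : Matrix n n ℂ) (f : ℂ → ℂ) :
    cfc f A = ∑ μ ∈ A.finite_spectrum.toFinset, f μ • spectralProj A μ := by
  have cont (g : ℂ → ℂ) : ContinuousOn g (spectrum ℂ A) := A.finite_spectrum.continuousOn g
  simp only [spectralProj, ← cfc_smul _ _ A (cont _)]
  rw [← cfc_sum _ A _ fun _ _ => cont _]
  refine cfc_congr fun x hx => ?_
  simp [Finset.sum_apply, Pi.single_apply, hx]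

lemma sum_spectralProj (hA : IsStarNormal A) :
    ∑ μ ∈ A.finite_spectrum.toFinset, spectralProj A μ = 1 := by
  simpa only [one_smul, cfc_const_one ℂ A hA] using (cfc_eq_sum_spectralProj A fun _ => 1).symm

lemma sum_smul_spectralProj (hA : IsStarNormal A) :
    ∑ μ ∈ A.finite_spectrum.toFinset, μ • spectralProj A μ = A := by
  simpa only [cfc_id' ℂ A hA] using (cfc_eq_sum_spectralProj A fun μ => μ).symm

end SpectralProjection

section RealPower

variable {n : Type*} [Fintype n] [DecidableEq n] {A B : Matrix n n ℂ}

lemma mpow_eq_cfc (hA : A.IsHermitian) (t : ℝ) : mpow A t = cfc (fun x : ℝ => x ^ t) A := by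
  rw [hA.cfc_eq, Matrix.IsHermitian.cfc, Unitary.conjStarAlgAut_apply, mpow, dif_pos hA]
  rfl

lemma continuousOn_spectrum (A : Matrix n n ℂ) (f : ℝ → ℝ) : ContinuousOn f (spectrum ℝ A) :=
  A.finite_real_spectrum.continuousOn f

lemma isHermitian_mpow (A : Matrix n n ℂ) (t : ℝ) : (mpow A t).IsHermitian := by
  by_cases hA : A.IsHermitian
  · rw [mpow_eq_cfc hA]
    exact cfc_predicate _ A
  · rw [mpow, dif_neg hA]
    exact isHermitian_zero

lemma mpow_zero (hA : A.IsHermitian) : mpow A 0 = 1 := by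
  simp only [mpow_eq_cfc hA, Real.rpow_zero]
  exact cfc_const_one ℝ A hA

lemma mpow_one (hA : A.IsHermitian) : mpow A 1 = A := by
  simp only [mpow_eq_cfc hA, Real.rpow_one]
  exact cfc_id' ℝ A hA

lemma pos_of_mem_spectrum (hA : A.PosDef) {x : ℝ} (hx : x ∈ spectrum ℝ A) : 0 < x := by
  obtain ⟨i, rfl⟩ := hA.1.spectrum_real_eq_range_eigenvalues ▸ hx
  exact hA.eigenvalues_pos i

lemma nonneg_of_mem_spectrum (hA : A.PosSemidef) {x : ℝ} (hx : x ∈ spectrum ℝ A) : 0 ≤ x := by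
  obtain ⟨i, rfl⟩ := hA.1.spectrum_real_eq_range_eigenvalues ▸ hx
  exact hA.eigenvalues_nonneg i

lemma mpow_add (hA : A.PosDef) (s t : ℝ) : mpow A (s + t) = mpow A s * mpow A t := by
  simp only [mpow_eq_cfc hA.1]
  rw [← cfc_mul _ _ A (continuousOn_spectrum A _) (continuousOn_spectrum A _)]
  exact cfc_congr fun x hx => Real.rpow_add (pos_of_mem_spectrum hA hx) s t

lemma mpow_mpow (hA : A.PosSemidef) (s t : ℝ) : mpow (mpow A s) t = mpow A (s * t) := by
  rw [mpow_eq_cfc (isHermitian_mpow A s), mpow_eq_cfc hA.1, mpow_eq_cfc hA.1]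
  have comp := cfc_comp' (fun x : ℝ => x ^ t) (fun x : ℝ => x ^ s) A
    ((A.finite_real_spectrum.image _).continuousOn _) (continuousOn_spectrum A _) hA.1
  rw [← comp]
  exact cfc_congr fun x hx => (Real.rpow_mul (nonneg_of_mem_spectrum hA hx) s t).symm

lemma posSemidef_mpow (hA : A.PosSemidef) (t : ℝ) : (mpow A t).PosSemidef := by
  rw [mpow, dif_pos hA.1]
  refine Unitary.isUnit_coe.posSemidef_star_right_conjugate_iff.2 ?_
  exact posSemidef_diagonal_iff.2 fun i => by
    exact_mod_cast Real.rpow_nonneg (hA.eigenvalues_nonneg i) t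

lemma posDef_mpow (hA : A.PosDef) (t : ℝ) : (mpow A t).PosDef := by
  rw [mpow, dif_pos hA.1]
  refine Unitary.isUnit_coe.posDef_star_right_conjugate_iff.2 ?_
  exact Matrix.PosDef.diagonal fun i => by
    exact_mod_cast Real.rpow_pos_of_pos (hA.eigenvalues_pos i) t

lemma posSemidef_mpow_mul_mul_mpow (A : Matrix n n ℂ) (hB : B.PosSemidef) (t : ℝ) :
    (mpow A t * B * mpow A t).PosSemidef := by
  have := hB.mul_mul_conjTranspose_same (mpow A t)
  rwa [(isHermitian_mpow A t).eq] at this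

lemma posDef_mpow_mul_mul_mpow (hA : A.PosDef) (hB : B.PosDef) (t : ℝ) :
    (mpow A t * B * mpow A t).PosDef := by
  have := (posDef_mpow hA t).isUnit.posDef_star_right_conjugate_iff.2 hB
  rwa [star_eq_conjTranspose, (isHermitian_mpow A t).eq] at this

lemma inv_eq_mpow (hA : A.PosDef) : A⁻¹ = mpow A (-1) := by
  refine Matrix.inv_eq_right_inv ?_
  nth_rewrite 1 [← mpow_one hA.1]
  rw [← mpow_add hA, add_neg_cancel, mpow_zero hA.1]

lemma mpow_eq_sum_spectralProj (hA : A.IsHermitian) (t : ℝ) :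
    mpow A t = ∑ μ ∈ A.finite_spectrum.toFinset, ((μ.re ^ t : ℝ) : ℂ) • spectralProj A μ := by
  rw [mpow_eq_cfc hA, cfc_real_eq_complex _ hA]
  exact cfc_eq_sum_spectralProj A _

lemma pos_of_mem_spectrum_complex (hA : A.PosDef) {μ : ℂ} (hμ : μ ∈ spectrum ℂ A) : 0 < μ := by
  obtain ⟨-, ⟨i, rfl⟩, rfl⟩ := hA.1.spectrum_eq_image_range ▸ hμ
  exact Complex.zero_lt_real.2 (hA.eigenvalues_pos i)

lemma re_pos_of_mem_spectrum (hA : A.PosDef) {μ : ℂ} (hμ : μ ∈ spectrum ℂ A) : 0 < μ.re :=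
  (Complex.lt_def.1 (pos_of_mem_spectrum_complex hA hμ)).1

lemma sum_inv_smul_spectralProj (hA : A.PosDef) :
    ∑ μ ∈ A.finite_spectrum.toFinset, μ⁻¹ • spectralProj A μ = A⁻¹ := by
  rw [← cfc_eq_sum_spectralProj]
  refine (Matrix.inv_eq_right_inv ?_).symm
  have cont (g : ℂ → ℂ) : ContinuousOn g (spectrum ℂ A) := A.finite_spectrum.continuousOn g
  have normal : IsStarNormal A := hA.isHermitian.isSelfAdjoint.isStarNormal
  nth_rewrite 1 [← cfc_id' ℂ A normal]
  rw [← cfc_mul _ _ A (cont _) (cont _), ← cfc_const_one ℂ A normal]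
  exact cfc_congr fun μ hμ => mul_inv_cancel₀ (pos_of_mem_spectrum_complex hA hμ).ne'

lemma re_trace_mpow_mul_mpow (hA : A.PosDef) (hB : B.PosDef) (s t : ℝ) :
    (mpow A s * mpow B t).trace.re =
      ∑ μ ∈ A.finite_spectrum.toFinset, ∑ ν ∈ B.finite_spectrum.toFinset,
        μ.re ^ s * ν.re ^ t * (spectralProj A μ * spectralProj B ν).trace.re := by
  simp only [mpow_eq_sum_spectralProj hA.1, mpow_eq_sum_spectralProj hB.1, Finset.sum_mul_sum,
    trace_sum, Complex.re_sum, smul_mul_smul_comm, trace_smul, smul_eq_mul, ← Complex.ofReal_mul,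
    Complex.re_ofReal_mul]

end RealPower

section TracePower

variable {n : Type*} [Fintype n] [DecidableEq n] {A B : Matrix n n ℂ}

/-- The trace of the `t`-th power of a Hermitian matrix, as a real number; for a positive
semidefinite matrix and `t ≥ 1` this is the `t`-th power of the Schatten `t`-norm. -/
noncomputable def tracePow (A : Matrix n n ℂ) (t : ℝ) : ℝ := (mpow A t).trace.re

lemma trace_mpow (A : Matrix n n ℂ) (t : ℝ) : (mpow A t).trace = tracePow A t := by
  rw [tracePow, eq_comm, ← Complex.conj_eq_iff_re]
  conv_rhs => rw [← (isHermitian_mpow A t).eq, trace_conjTranspose]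
  rfl

lemma tracePow_eq_sum_eigenvalues (hA : A.IsHermitian) (t : ℝ) :
    tracePow A t = ∑ i, hA.eigenvalues i ^ t := by
  rw [tracePow, mpow, dif_pos hA, trace_mul_comm, ← mul_assoc,
    Unitary.coe_star_mul_self, one_mul, trace_diagonal]
  simp only [Complex.re_sum, Complex.ofReal_re]

lemma tracePow_eq_of_charpoly_eq (hA : A.IsHermitian) (hB : B.IsHermitian)
    (h : A.charpoly = B.charpoly) (t : ℝ) : tracePow A t = tracePow B t := by
  rw [tracePow_eq_sum_eigenvalues hA, tracePow_eq_sum_eigenvalues hB,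
    (hA.eigenvalues_eq_eigenvalues_iff hB).2 h]

lemma charpoly_mpow_mul_mul_mpow (hA : A.PosDef) (B : Matrix n n ℂ) (t : ℝ) :
    (mpow A t * B * mpow A t).charpoly = (mpow A (2 * t) * B).charpoly := by
  rw [charpoly_mul_comm, ← mul_assoc, ← mpow_add hA, two_mul]

lemma tracePow_mpow_mul_mpow_mul_mpow (hA : A.PosDef) (hB : B.PosDef) (s t r : ℝ) :
    tracePow (mpow A s * mpow B (2 * t) * mpow A s) r =
      tracePow (mpow B t * mpow A (2 * s) * mpow B t) r := by
  refine tracePow_eq_of_charpoly_eq (posDef_mpow_mul_mul_mpow hA (posDef_mpow hB _) s).1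
    (posDef_mpow_mul_mul_mpow hB (posDef_mpow hA _) t).1 ?_ r
  rw [charpoly_mpow_mul_mul_mpow hA, charpoly_mpow_mul_mul_mpow hB, charpoly_mul_comm]

lemma tracePow_mul_conjTranspose (X : Matrix n n ℂ) (t : ℝ) :
    tracePow (X * Xᴴ) t = tracePow (Xᴴ * X) t :=
  tracePow_eq_of_charpoly_eq (isHermitian_mul_conjTranspose_self X)
    (isHermitian_conjTranspose_mul_self X) (charpoly_mul_comm X Xᴴ) t

lemma tracePow_nonneg (hA : A.PosSemidef) (t : ℝ) : 0 ≤ tracePow A t :=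
  (Complex.le_def.1 (posSemidef_mpow hA t).trace_nonneg).1

lemma tracePow_mpow (hA : A.PosSemidef) (s t : ℝ) : tracePow (mpow A s) t = tracePow A (s * t) := by
  rw [tracePow, mpow_mpow hA, tracePow]

/-- All three traces are sums over pairs of eigenvalues with the same nonnegative weights
`Tr (P_μ Q_ν)`. -/
lemma klein_inequality (hA : A.PosDef) (hB : B.PosDef) {c₁ c₂ c₃ s₁ t₂ s t : ℝ}
    (h : ∀ a b : ℝ, 0 < a → 0 < b → 0 ≤ c₁ * a ^ s₁ + c₂ * b ^ t₂ + c₃ * (a ^ s * b ^ t)) :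
    0 ≤ c₁ * tracePow A s₁ + c₂ * tracePow B t₂ + c₃ * (mpow A s * mpow B t).trace.re := by
  have left : tracePow A s₁ = (mpow A s₁ * mpow B 0).trace.re := by
    rw [mpow_zero hB.1, mul_one, tracePow]
  have right : tracePow B t₂ = (mpow A 0 * mpow B t₂).trace.re := by
    rw [mpow_zero hA.1, one_mul, tracePow]
  simp only [left, right, re_trace_mpow_mul_mpow hA hB, Real.rpow_zero, mul_one, one_mul,
    Finset.mul_sum, ← Finset.sum_add_distrib]
  refine Finset.sum_nonneg fun μ hμ => Finset.sum_nonneg fun ν hν => ?_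
  have weight := re_trace_mul_nonneg (posSemidef_spectralProj A μ) (posSemidef_spectralProj B ν)
  have scalar := h μ.re ν.re (re_pos_of_mem_spectrum hA (by simpa using hμ))
    (re_pos_of_mem_spectrum hB (by simpa using hν))
  linarith [mul_nonneg scalar weight]

lemma re_trace_mpow_mul_mpow_le (hA : A.PosDef) (hB : B.PosDef) {w₁ w₂ : ℝ} (hw₁ : 0 ≤ w₁)
    (hw₂ : 0 ≤ w₂) (hw : w₁ + w₂ = 1) (s t : ℝ) :
    (mpow A (s * w₁) * mpow B (t * w₂)).trace.re ≤ w₁ * tracePow A s + w₂ * tracePow B t := by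
  have young : ∀ a b : ℝ, 0 < a → 0 < b →
      0 ≤ w₁ * a ^ s + w₂ * b ^ t + -1 * (a ^ (s * w₁) * b ^ (t * w₂)) := by
    intro a b ha hb
    have := Real.geom_mean_le_arith_mean2_weighted hw₁ hw₂ (Real.rpow_nonneg ha.le s)
      (Real.rpow_nonneg hb.le t) hw
    rw [← Real.rpow_mul ha.le, ← Real.rpow_mul hb.le] at this
    linarith
  linarith [klein_inequality hA hB young]

lemma add_le_re_trace_mpow_mul_mpow (hA : A.PosDef) (hB : B.PosDef) {w : ℝ} (hw : 1 ≤ w)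
    (s t : ℝ) : w * tracePow A s + (1 - w) * tracePow B t ≤
      (mpow A (s * w) * mpow B (t * (1 - w))).trace.re := by
  have reverse_young : ∀ a b : ℝ, 0 < a → 0 < b →
      0 ≤ -w * a ^ s + (w - 1) * b ^ t + 1 * (a ^ (s * w) * b ^ (t * (1 - w))) := by
    intro a b ha hb
    have hx := Real.rpow_pos_of_pos ha s
    have hy := Real.rpow_pos_of_pos hb t
    rw [Real.rpow_mul ha.le, Real.rpow_mul hb.le]
    generalize a ^ s = x at hx ⊢
    generalize b ^ t = y at hy ⊢
    have bernoulli : 1 + w * (x / y - 1) ≤ (1 + (x / y - 1)) ^ w :=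
      one_add_mul_self_le_rpow_one_add (by linarith [div_pos hx hy]) hw
    have : y * (1 + w * (x / y - 1)) ≤ x ^ w * y ^ (1 - w) := by
      calc y * (1 + w * (x / y - 1)) ≤ y * (1 + (x / y - 1)) ^ w := by gcongr
        _ = x ^ w * y ^ (1 - w) := by
          rw [add_sub_cancel, Real.div_rpow hx.le hy.le, Real.rpow_sub hy, Real.rpow_one]
          ring
    have expand : y * (1 + w * (x / y - 1)) = w * x - (w - 1) * y := by field_simp; ring
    linarith
  linarith [klein_inequality hA hB reverse_young]

/-- Compare `Tr A^q = Tr A A^(q-1) ≤ Tr B A^(q-1)` with Young's bound for the latter. -/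
lemma tracePow_le_tracePow (hA : A.PosDef) (hB : B.PosDef) (hAB : (B - A).PosSemidef) {q : ℝ}
    (hq : 1 ≤ q) : tracePow A q ≤ tracePow B q := by
  have hq₀ : 0 < q := by linarith
  have mono : tracePow A q ≤ (B * mpow A (q - 1)).trace.re := by
    have := re_trace_mul_nonneg hAB (posSemidef_mpow hA.posSemidef (q - 1))
    have hpow : tracePow A q = (A * mpow A (q - 1)).trace.re := by
      nth_rewrite 2 [← mpow_one hA.1]
      rw [← mpow_add hA, add_sub_cancel, tracePow]
    rw [sub_mul, trace_sub, Complex.sub_re] at this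
    linarith
  have young := re_trace_mpow_mul_mpow_le hB hA (w₁ := 1 / q) (w₂ := 1 - 1 / q) (by positivity)
    (by rw [sub_nonneg, div_le_one hq₀]; exact hq) (by ring) q q
  rw [mul_one_div_cancel hq₀.ne', mpow_one hB.1,
    show q * (1 - 1 / q) = q - 1 by field_simp] at young
  have : 1 / q * tracePow A q ≤ 1 / q * tracePow B q := by linarith
  exact le_of_mul_le_mul_left this (by positivity)

end TracePower

section ComplexPower

variable {n : Type*} [Fintype n] [DecidableEq n] {A : Matrix n n ℂ}

/-- The complex power `A ^ w` of a normal matrix, taken with the principal branch of the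
logarithm on the spectrum; it extends `mpow` to complex exponents. -/
noncomputable def cpow (A : Matrix n n ℂ) (w : ℂ) : Matrix n n ℂ := cfc (fun x : ℂ => x ^ w) A

lemma cpow_ofReal (hA : A.PosDef) (t : ℝ) : cpow A t = mpow A t := by
  rw [mpow_eq_cfc hA.1, cfc_real_eq_complex _ hA.1]
  refine cfc_congr fun μ hμ => ?_
  obtain ⟨-, ⟨i, rfl⟩, rfl⟩ := hA.1.spectrum_eq_image_range ▸ hμ
  exact (Complex.ofReal_cpow (hA.eigenvalues_pos i).le t).symm

lemma cpow_add (hA : A.PosDef) (v w : ℂ) : cpow A (v + w) = cpow A v * cpow A w := by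
  have cont (g : ℂ → ℂ) : ContinuousOn g (spectrum ℂ A) := A.finite_spectrum.continuousOn g
  rw [cpow, cpow, cpow, ← cfc_mul _ _ A (cont _) (cont _)]
  refine cfc_congr fun μ hμ => Complex.cpow_add v w ?_
  rintro rfl
  exact (re_pos_of_mem_spectrum hA hμ).false

lemma commute_cpow (A : Matrix n n ℂ) (v w : ℂ) : Commute (cpow A v) (cpow A w) :=
  cfc_commute_cfc _ _ A

lemma conjTranspose_cpow (hA : A.PosDef) (w : ℂ) :
    (cpow A w)ᴴ = cpow A (starRingEnd ℂ w) := by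
  rw [cpow, ← star_eq_conjTranspose, ← cfc_star]
  refine cfc_congr fun μ hμ => ?_
  obtain ⟨-, ⟨i, rfl⟩, rfl⟩ := hA.1.spectrum_eq_image_range ▸ hμ
  have harg : Complex.arg (hA.1.eigenvalues i : ℂ) ≠ Real.pi := by
    rw [Complex.arg_ofReal_of_nonneg (hA.eigenvalues_pos i).le]
    exact Real.pi_pos.ne
  have := Complex.cpow_conj (hA.1.eigenvalues i : ℂ) w harg
  rw [Complex.conj_ofReal] at this
  exact this.symm

lemma cpow_mul_conjTranspose_self (hA : A.PosDef) (w : ℂ) :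
    cpow A w * (cpow A w)ᴴ = mpow A (2 * w.re) := by
  rw [conjTranspose_cpow hA, ← cpow_add hA, Complex.add_conj, cpow_ofReal hA]

lemma conjTranspose_cpow_mul_self (hA : A.PosDef) (w : ℂ) :
    (cpow A w)ᴴ * cpow A w = mpow A (2 * w.re) := by
  rw [conjTranspose_cpow hA, ← cpow_add hA, add_comm, Complex.add_conj, cpow_ofReal hA]

lemma cpow_mem_unitary (hA : A.PosDef) {w : ℂ} (hw : w.re = 0) :
    cpow A w ∈ unitary (Matrix n n ℂ) := by
  constructor
  · rw [star_eq_conjTranspose, conjTranspose_cpow_mul_self hA, hw, mul_zero, mpow_zero hA.1]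
  · rw [star_eq_conjTranspose, cpow_mul_conjTranspose_self hA, hw, mul_zero, mpow_zero hA.1]

end ComplexPower

section CauchySchwarz

variable {n m : Type*} [Fintype n] [DecidableEq n] [Fintype m]

/-- A unitary is a combination of spectral projections with unimodular coefficients (the argument
behind the Russo–Dye theorem), which reduces the bound to positive semidefinite matrices. -/
lemma norm_trace_map_unitary_mul_mul_le {Λ : Matrix n n ℂ →ₗ[ℂ] Matrix m m ℂ}
    (hΛ : ∀ A, A.PosSemidef → (Λ A).PosSemidef) {V : Matrix n n ℂ}
    (hV : V ∈ unitary (Matrix n n ℂ)) (C D : Matrix m m ℂ) :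
    ‖(Λ V * (C * D)).trace‖ ≤ ((Λ 1 * (C * Cᴴ)).trace.re + (Λ 1 * (Dᴴ * D)).trace.re) / 2 := by
  have hnormal : IsStarNormal V := ⟨hV.1.trans hV.2.symm⟩
  have map_V : Λ V = ∑ μ ∈ V.finite_spectrum.toFinset, μ • Λ (spectralProj V μ) := by
    conv_lhs => rw [← sum_smul_spectralProj hnormal]
    simp only [map_sum, map_smul]
  rw [map_V, ← sum_spectralProj hnormal, map_sum]
  simp only [Finset.sum_mul, trace_sum, Complex.re_sum, ← Finset.sum_add_distrib, Finset.sum_div]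
  refine (norm_sum_le _ _).trans (Finset.sum_le_sum fun μ hμ => ?_)
  have unimodular : ‖μ‖ = 1 := spectrum.norm_eq_one_of_unitary hV (by simpa using hμ)
  rw [smul_mul_assoc, trace_smul, norm_smul, unimodular, one_mul]
  exact norm_trace_mul_mul_le (hΛ _ (posSemidef_spectralProj V μ)) C D

lemma norm_trace_map_unitary_mul_cpow_le [DecidableEq m] {Λ : Matrix n n ℂ →ₗ[ℂ] Matrix m m ℂ}
    (hΛ : ∀ A, A.PosSemidef → (Λ A).PosSemidef) {V : Matrix n n ℂ}
    (hV : V ∈ unitary (Matrix n n ℂ)) {X c : Matrix m m ℂ} (hX : X ∈ unitary (Matrix m m ℂ))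
    (hcomm : Commute X (Λ 1)) (hc : c.PosDef) (q : ℂ) :
    ‖(Λ V * (X * cpow c q * X)).trace‖ ≤ (Λ 1 * mpow c q.re).trace.re := by
  have split : X * cpow c q * X = (X * cpow c (q / 2)) * (cpow c (q / 2) * X) := by
    rw [← add_halves q, cpow_add hc, add_halves]
    noncomm_ring
  have re_half : 2 * (q / 2).re = q.re := by
    rw [Complex.div_ofNat_re, mul_div_cancel₀ _ two_ne_zero]
  have left : (Λ 1 * (X * cpow c (q / 2) * (X * cpow c (q / 2))ᴴ)).trace =
      (Λ 1 * mpow c q.re).trace := by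
    calc (Λ 1 * (X * cpow c (q / 2) * (X * cpow c (q / 2))ᴴ)).trace
        = ((X * Λ 1) * (cpow c (q / 2) * (cpow c (q / 2))ᴴ) * Xᴴ).trace := by
          rw [hcomm.eq, conjTranspose_mul]
          noncomm_ring
      _ = (Λ 1 * mpow c q.re).trace := by
          rw [cpow_mul_conjTranspose_self hc, re_half, mul_assoc X, mul_assoc X, trace_mul_comm,
            mul_assoc, ← star_eq_conjTranspose, hX.1, mul_one]
  have right : (Λ 1 * ((cpow c (q / 2) * X)ᴴ * (cpow c (q / 2) * X))).trace =
      (Λ 1 * mpow c q.re).trace := by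
    calc (Λ 1 * ((cpow c (q / 2) * X)ᴴ * (cpow c (q / 2) * X))).trace
        = (Λ 1 * Xᴴ * ((cpow c (q / 2))ᴴ * cpow c (q / 2)) * X).trace := by
          rw [conjTranspose_mul]
          noncomm_ring
      _ = (Λ 1 * mpow c q.re).trace := by
          rw [conjTranspose_cpow_mul_self hc, re_half, trace_mul_comm, ← mul_assoc, ← mul_assoc,
            hcomm.eq, mul_assoc (Λ 1), ← star_eq_conjTranspose, hX.2, mul_one]
  have := norm_trace_map_unitary_mul_mul_le hΛ hV (X * cpow c (q / 2)) (cpow c (q / 2) * X)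
  rw [left, right, add_self_div_two, ← split] at this
  exact this

end CauchySchwarz

section PositiveUnital

variable {n m : Type*} [DecidableEq n] [DecidableEq m]
  {Φ : Matrix m m ℂ →ₗ[ℂ] Matrix n n ℂ}

open scoped MatrixOrder in
lemma posDef_map_of_map_one [Finite m] (hΦ : ∀ A, A.PosSemidef → (Φ A).PosSemidef)
    (hΦ_one : Φ 1 = 1) {B : Matrix m m ℂ} (hB : B.PosDef) : (Φ B).PosDef := by
  have := Fintype.ofFinite m
  rcases isEmpty_or_nonempty m with hm | hm
  · rw [Subsingleton.elim B 1, hΦ_one]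
    exact PosDef.one
  obtain ⟨c, hc, hcB⟩ := (CFC.exists_pos_algebraMap_le_iff hB.1).2 fun _ => pos_of_mem_spectrum hB
  have lower := hΦ _ (Matrix.le_iff.1 hcB)
  rw [Algebra.algebraMap_eq_smul_one, map_sub, LinearMap.map_smul_of_tower, hΦ_one] at lower
  have := (PosDef.one.smul hc).add_posSemidef lower
  rwa [add_sub_cancel] at this

lemma inv_smul_one_sub_smul_mul_one_sub_smul [Fintype n] {μ : ℂ} (hμ : μ ≠ 0)
    (Y Q : Matrix n n ℂ) :
    μ⁻¹ • ((1 - μ • Y) * Q * (1 - μ • Y)) = μ⁻¹ • Q - Y * Q - Q * Y + Y * (μ • Q) * Y := by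
  simp only [sub_mul, mul_sub, one_mul, mul_one, smul_mul_assoc, mul_smul_comm, smul_sub,
    smul_smul, inv_mul_cancel₀ hμ, inv_mul_cancel_left₀ hμ, one_smul, mul_assoc]
  abel

/-- Choi's inequality for positive unital maps: with `Y = (Φ a)⁻¹`, the difference is
`∑ μ⁻¹ (1 - μ Y) Φ(P_μ) (1 - μ Y)`, summed over the spectral decomposition `a = ∑ μ P_μ`. -/
theorem posSemidef_map_inv_sub_inv_map [Fintype n] [Fintype m]
    (hΦ : ∀ A, A.PosSemidef → (Φ A).PosSemidef) (hΦ_one : Φ 1 = 1) {a : Matrix m m ℂ}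
    (ha : a.PosDef) : (Φ a⁻¹ - (Φ a)⁻¹).PosSemidef := by
  have hΦa := posDef_map_of_map_one hΦ hΦ_one ha
  set Y := (Φ a)⁻¹
  have hY : Y.IsHermitian := hΦa.1.inv
  have Y_mul : Y * Φ a = 1 := nonsing_inv_mul _ ((isUnit_iff_isUnit_det _).1 hΦa.isUnit)
  have normal : IsStarNormal a := ha.isHermitian.isSelfAdjoint.isStarNormal
  set s := a.finite_spectrum.toFinset
  set P := spectralProj a
  have pos_of_mem {μ : ℂ} (hμ : μ ∈ s) : 0 < μ :=
    pos_of_mem_spectrum_complex ha (by simpa [s] using hμ)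
  have decomposition :
      Φ a⁻¹ - Y = ∑ μ ∈ s, μ⁻¹ • ((1 - μ • Y) * Φ (P μ) * (1 - μ • Y)) := by
    have map_sum_smul (f : ℂ → ℂ) : ∑ μ ∈ s, f μ • Φ (P μ) = Φ (∑ μ ∈ s, f μ • P μ) := by
      simp only [map_sum, map_smul]
    rw [Finset.sum_congr rfl fun μ hμ =>
        inv_smul_one_sub_smul_mul_one_sub_smul (pos_of_mem hμ).ne' Y (Φ (P μ)),
      Finset.sum_add_distrib, Finset.sum_sub_distrib, Finset.sum_sub_distrib, ← Finset.mul_sum,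
      ← Finset.sum_mul, ← Finset.sum_mul, ← Finset.mul_sum, ← map_sum, map_sum_smul,
      map_sum_smul fun μ => μ, sum_inv_smul_spectralProj ha, sum_spectralProj normal,
      sum_smul_spectralProj normal, hΦ_one, Y_mul]
    simp
  rw [decomposition]
  refine posSemidef_sum _ fun μ hμ => PosSemidef.smul ?_ (inv_nonneg.2 (pos_of_mem hμ).le)
  have := (hΦ _ (posSemidef_spectralProj a μ)).mul_mul_conjTranspose_same (1 - μ • Y)
  have self_adjoint : (1 - μ • Y)ᴴ = 1 - μ • Y := by
    rw [conjTranspose_sub, conjTranspose_one, conjTranspose_smul, hY.eq,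
      (IsSelfAdjoint.of_nonneg (pos_of_mem hμ).le).star_eq]
  rwa [self_adjoint] at this

end PositiveUnital

section TraceAdjoint

variable {n m : Type*} [Fintype n] [DecidableEq n] [Fintype m] [DecidableEq m]
  {Ψ : Matrix n n ℂ →ₗ[ℂ] Matrix m m ℂ}

/-- A linear map between matrix algebras that preserves positive semidefiniteness and the
trace. -/
structure IsPositiveTracePreserving (Ψ : Matrix n n ℂ →ₗ[ℂ] Matrix m m ℂ) : Prop where
  map_posSemidef : ∀ A, A.PosSemidef → (Ψ A).PosSemidef
  trace_map : ∀ A, (Ψ A).trace = A.trace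

/-- The adjoint of `Ψ` for the bilinear pairing `(A, B) ↦ Tr (A * B)`; for a trace-preserving `Ψ`
it is unital, and `Ψ` is its predual. -/
noncomputable def traceAdjoint (Ψ : Matrix n n ℂ →ₗ[ℂ] Matrix m m ℂ) :
    Matrix m m ℂ →ₗ[ℂ] Matrix n n ℂ where
  toFun B := Matrix.of fun i j => (B * Ψ (Matrix.single j i 1)).trace
  map_add' B C := by
    ext i j
    simp only [add_mul, trace_add, of_apply, Matrix.add_apply]
  map_smul' c B := by
    ext i j
    simp only [smul_mul_assoc, trace_smul, of_apply, Matrix.smul_apply, RingHom.id_apply]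

lemma trace_traceAdjoint_mul (Ψ : Matrix n n ℂ →ₗ[ℂ] Matrix m m ℂ) (B : Matrix m m ℂ)
    (A : Matrix n n ℂ) : (traceAdjoint Ψ B * A).trace = (B * Ψ A).trace := by
  induction A using Matrix.induction_on' with
  | h_zero => simp only [mul_zero, map_zero, trace_zero]
  | h_add A₁ A₂ h₁ h₂ => simp only [mul_add, trace_add, map_add, h₁, h₂]
  | h_std_basis i j x =>
    have hx : single i j x = x • single i j (1 : ℂ) := by rw [smul_single, smul_eq_mul, mul_one]
    rw [hx, map_smul, mul_smul_comm, mul_smul_comm, trace_smul, trace_smul, trace_mul_single]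
    simp [traceAdjoint]

lemma traceAdjoint_id (B : Matrix n n ℂ) : traceAdjoint LinearMap.id B = B :=
  ext_iff_trace_mul_right.2 fun A => trace_traceAdjoint_mul _ B A

lemma traceAdjoint_one (hΨ : IsPositiveTracePreserving Ψ) : traceAdjoint Ψ 1 = 1 :=
  ext_iff_trace_mul_right.2 fun A => by
    rw [trace_traceAdjoint_mul, one_mul, one_mul, hΨ.trace_map]

lemma posSemidef_traceAdjoint (hΨ : IsPositiveTracePreserving Ψ) {B : Matrix m m ℂ}
    (hB : B.PosSemidef) : (traceAdjoint Ψ B).PosSemidef :=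
  posSemidef_of_trace_mul_nonneg fun A hA => by
    rw [trace_traceAdjoint_mul]
    exact trace_mul_nonneg hB (hΨ.map_posSemidef A hA)

lemma posDef_traceAdjoint (hΨ : IsPositiveTracePreserving Ψ) {B : Matrix m m ℂ}
    (hB : B.PosDef) : (traceAdjoint Ψ B).PosDef :=
  posDef_map_of_map_one (fun _ => posSemidef_traceAdjoint hΨ) (traceAdjoint_one hΨ) hB

end TraceAdjoint

section ThreeLines

open Complex.HadamardThreeLines

/-- The class of functions to which the three lines theorem is applied: entire functions that are
bounded on the closed strip `0 ≤ re w ≤ 1`. -/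
def StripBounded {E : Type*} [NormedAddCommGroup E] [NormedSpace ℂ E] (F : ℂ → E) : Prop :=
  Differentiable ℂ F ∧ ∃ C, ∀ w ∈ verticalClosedStrip 0 1, ‖F w‖ ≤ C

namespace StripBounded

variable {E E' : Type*} [NormedAddCommGroup E] [NormedSpace ℂ E]
  [NormedAddCommGroup E'] [NormedSpace ℂ E']

lemma mul {R : Type*} [NormedRing R] [NormedAlgebra ℂ R] {F G : ℂ → R}
    (hF : StripBounded F) (hG : StripBounded G) : StripBounded fun w => F w * G w := by
  obtain ⟨dF, C, hC⟩ := hF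
  obtain ⟨dG, D, hD⟩ := hG
  refine ⟨dF.mul dG, C * D, fun w hw => (norm_mul_le _ _).trans ?_⟩
  exact mul_le_mul (hC w hw) (hD w hw) (norm_nonneg _) ((norm_nonneg _).trans (hC w hw))

lemma linearMap_comp [FiniteDimensional ℂ E] (L : E →ₗ[ℂ] E') {F : ℂ → E} (hF : StripBounded F) :
    StripBounded fun w => L (F w) := by
  obtain ⟨dF, C, hC⟩ := hF
  exact ⟨L.toContinuousLinearMap.differentiable.comp dF, ‖L.toContinuousLinearMap‖ * C,
    fun w hw => L.toContinuousLinearMap.le_opNorm_of_le (hC w hw)⟩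

lemma sum {ι : Type*} {s : Finset ι} {F : ι → ℂ → E} (hF : ∀ i ∈ s, StripBounded (F i)) :
    StripBounded fun w => ∑ i ∈ s, F i w := by
  choose! dF C hC using hF
  exact ⟨Differentiable.fun_sum dF, ∑ i ∈ s, C i,
    fun w hw => norm_sum_le_of_le s fun i hi => hC i hi w hw⟩

lemma ofReal_cpow_smul {x : ℝ} (hx : 0 < x) {f : ℂ → ℂ} (a b : ℝ) (hf : ∀ w, f w = a * w + b)
    (v : E) : StripBounded fun w => (x : ℂ) ^ f w • v := by
  obtain ⟨C, hC⟩ := isCompact_Icc.exists_bound_of_continuousOn (s := Set.Icc (0 : ℝ) 1)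
    (f := fun s : ℝ => x ^ (a * s + b)) (by fun_prop (disch := positivity))
  obtain rfl : f = fun w => (a * w + b : ℂ) := funext hf
  refine ⟨?_, C * ‖v‖, fun w hw => ?_⟩
  · have : (x : ℂ) ≠ 0 := Complex.ofReal_ne_zero.2 hx.ne'
    fun_prop (disch := simp [this])
  · have hre : (a * w + b : ℂ).re = a * w.re + b := by
      rw [Complex.add_re, Complex.re_ofReal_mul, Complex.ofReal_re]
    rw [norm_smul, Complex.norm_cpow_eq_rpow_re_of_pos hx, hre]
    exact mul_le_mul_of_nonneg_right ((le_abs_self _).trans (hC w.re hw)) (norm_nonneg v)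

lemma cpow {n : Type*} [Fintype n] [DecidableEq n] {A : Matrix n n ℂ} (hA : A.PosDef)
    {f : ℂ → ℂ} (a b : ℝ) (hf : ∀ w, f w = a * w + b) : StripBounded fun w => cpow A (f w) := by
  simp only [QuantumRenyi.cpow, cfc_eq_sum_spectralProj]
  refine sum fun μ hμ => ?_
  rw [Set.Finite.mem_toFinset, hA.1.spectrum_eq_image_range] at hμ
  obtain ⟨-, ⟨i, rfl⟩, rfl⟩ := hμ
  exact ofReal_cpow_smul (hA.eigenvalues_pos i) a b hf _

lemma norm_le_interp {F : ℂ → E} (hF : StripBounded F) {a b : ℝ}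
    (ha : ∀ w : ℂ, w.re = 0 → ‖F w‖ ≤ a) (hb : ∀ w : ℂ, w.re = 1 → ‖F w‖ ≤ b) {θ : ℝ}
    (hθ : θ ∈ Set.Icc (0 : ℝ) 1) : ‖F θ‖ ≤ a ^ (1 - θ) * b ^ θ := by
  obtain ⟨dF, C, hC⟩ := hF
  exact norm_le_interp_of_mem_verticalClosedStrip₀₁' F (z := θ) hθ dF.diffContOnCl
    ⟨C, Set.forall_mem_image.2 hC⟩ ha hb

end StripBounded

end ThreeLines

section Interpolation

variable {n m : Type*} [Fintype n] [DecidableEq n] [Fintype m] [DecidableEq m]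
  {Ψ : Matrix n n ℂ →ₗ[ℂ] Matrix m m ℂ} {ρ c : Matrix n n ℂ} {b : Matrix m m ℂ}

/-- The entire function
`F(w) = Tr Ψ*(R^(κw/2) b^(pw) R^(κw/2)) ρ^(w/2) c^(p - pw) ρ^(w/2)`, where `R = Ψ ρ`, to which the
three lines theorem is applied. -/
noncomputable def interpolant (Ψ : Matrix n n ℂ →ₗ[ℂ] Matrix m m ℂ) (ρ c : Matrix n n ℂ)
    (b : Matrix m m ℂ) (κ p : ℝ) (w : ℂ) : ℂ :=
  (traceAdjoint Ψ (cpow (Ψ ρ) (κ * w / 2) * cpow b (p * w) * cpow (Ψ ρ) (κ * w / 2)) *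
    (cpow ρ (w / 2) * cpow c (p - p * w) * cpow ρ (w / 2))).trace

lemma stripBounded_interpolant (hρ : ρ.PosDef) (hΨρ : (Ψ ρ).PosDef) (hb : b.PosDef)
    (hc : c.PosDef) (κ p : ℝ) : StripBounded (interpolant Ψ ρ c b κ p) := by
  have hR : StripBounded fun w => cpow (Ψ ρ) (κ * w / 2) :=
    .cpow hΨρ (κ / 2) 0 fun w => by push_cast; ring
  have hb' : StripBounded fun w => cpow b (p * w) := .cpow hb p 0 fun w => by push_cast; ring
  have hρ' : StripBounded fun w => cpow ρ (w / 2) :=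
    .cpow hρ (1 / 2) 0 fun w => by push_cast; ring
  have hc' : StripBounded fun w => cpow c (p - p * w) :=
    .cpow hc (-p) p fun w => by push_cast; ring
  exact ((((hR.mul hb').mul hR).linearMap_comp (traceAdjoint Ψ)).mul
    ((hρ'.mul hc').mul hρ')).linearMap_comp (traceLinearMap n ℂ ℂ)

lemma norm_interpolant_le_of_re_eq_zero (hΨ : IsPositiveTracePreserving Ψ) (hρ : ρ.PosDef)
    (hΨρ : (Ψ ρ).PosDef) (hb : b.PosDef) (hc : c.PosDef) (κ p : ℝ) {w : ℂ} (hw : w.re = 0) :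
    ‖interpolant Ψ ρ c b κ p w‖ ≤ tracePow c p := by
  have hR := cpow_mem_unitary hΨρ (w := κ * w / 2) (by simp [hw])
  have hV := mul_mem (mul_mem hR (cpow_mem_unitary hb (w := p * w) (by simp [hw]))) hR
  have hX := cpow_mem_unitary hρ (w := w / 2) (by simp [hw])
  have := norm_trace_map_unitary_mul_cpow_le (fun _ => posSemidef_traceAdjoint hΨ) hV hX
    (traceAdjoint_one hΨ ▸ Commute.one_right _) hc (p - p * w)
  rwa [traceAdjoint_one hΨ, one_mul, Complex.sub_re, Complex.re_ofReal_mul, hw, mul_zero, sub_zero]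
    at this

/-- On the line `re w = 1`, moving `Ψ` to the other factor of the trace turns the interpolant into a
pairing of `b^(p + pv)` with the positive map `A ↦ R^(κ/2) Ψ(ρ^(1/2) A ρ^(1/2)) R^(κ/2)`. -/
lemma interpolant_one_add (hρ : ρ.PosDef) (hΨρ : (Ψ ρ).PosDef) (κ p : ℝ) (v : ℂ) :
    interpolant Ψ ρ c b κ p (1 + v) =
      (mpow (Ψ ρ) (κ / 2) * Ψ (mpow ρ (1 / 2) *
          (cpow ρ (v / 2) * cpow c (-(p * v)) * cpow ρ (v / 2)) * mpow ρ (1 / 2)) *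
        mpow (Ψ ρ) (κ / 2) *
        (cpow (Ψ ρ) (κ * v / 2) * cpow b (p * (1 + v)) * cpow (Ψ ρ) (κ * v / 2))).trace := by
  have split_ρ : cpow ρ ((1 + v) / 2) = mpow ρ (1 / 2) * cpow ρ (v / 2) := by
    rw [← cpow_ofReal hρ, ← cpow_add hρ]
    push_cast
    ring_nf
  have comm_ρ : mpow ρ (1 / 2) * cpow ρ (v / 2) = cpow ρ (v / 2) * mpow ρ (1 / 2) := by
    rw [← cpow_ofReal hρ]
    exact commute_cpow _ _ _
  have split_R : cpow (Ψ ρ) (κ * (1 + v) / 2) =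
      mpow (Ψ ρ) (κ / 2) * cpow (Ψ ρ) (κ * v / 2) := by
    rw [← cpow_ofReal hΨρ, ← cpow_add hΨρ]
    push_cast
    ring_nf
  have comm_R : mpow (Ψ ρ) (κ / 2) * cpow (Ψ ρ) (κ * v / 2) =
      cpow (Ψ ρ) (κ * v / 2) * mpow (Ψ ρ) (κ / 2) := by
    rw [← cpow_ofReal hΨρ]
    exact commute_cpow _ _ _
  have exponent : (p : ℂ) - p * (1 + v) = -(p * v) := by ring
  rw [interpolant, trace_traceAdjoint_mul, split_ρ, split_R, exponent]
  nth_rewrite 2 [comm_ρ]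
  nth_rewrite 2 [comm_R]
  rw [← mul_assoc _ _ (mpow (Ψ ρ) (κ / 2)), mul_assoc _ (mpow (Ψ ρ) (κ / 2)), trace_mul_comm]
  simp only [mul_assoc]

lemma norm_interpolant_le_of_re_eq_one (hΨ : IsPositiveTracePreserving Ψ) (hρ : ρ.PosDef)
    (hΨρ : (Ψ ρ).PosDef) (hb : b.PosDef) (hc : c.PosDef) (κ p : ℝ) {w : ℂ} (hw : w.re = 1) :
    ‖interpolant Ψ ρ c b κ p w‖ ≤ (mpow (Ψ ρ) (1 + κ) * mpow b p).trace.re := by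
  obtain ⟨v, rfl, hv⟩ : ∃ v : ℂ, w = 1 + v ∧ v.re = 0 := ⟨w - 1, by ring, by simp [hw]⟩
  set h := mpow ρ (1 / 2)
  set H := mpow (Ψ ρ) (κ / 2)
  let Λ := LinearMap.mulLeftRight ℂ (H, H) ∘ₗ Ψ ∘ₗ LinearMap.mulLeftRight ℂ (h, h)
  have hΛ_apply (A : Matrix n n ℂ) : Λ A = H * Ψ (h * A * h) * H := rfl
  have hΛ (A : Matrix n n ℂ) (hA : A.PosSemidef) : (Λ A).PosSemidef :=
    posSemidef_mpow_mul_mul_mpow _ (hΨ.map_posSemidef _ (posSemidef_mpow_mul_mul_mpow _ hA _)) _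
  have hΛ_one : Λ 1 = mpow (Ψ ρ) (1 + κ) := by
    rw [hΛ_apply, mul_one, ← mpow_add hρ, add_halves, mpow_one hρ.1]
    calc H * Ψ ρ * H = H * mpow (Ψ ρ) 1 * H := by rw [mpow_one hΨρ.1]
      _ = mpow (Ψ ρ) (1 + κ) := by
        rw [← mpow_add hΨρ, ← mpow_add hΨρ]
        ring_nf
  have hV : cpow ρ (v / 2) * cpow c (-(p * v)) * cpow ρ (v / 2) ∈ unitary (Matrix n n ℂ) := by
    have := cpow_mem_unitary hρ (w := v / 2) (by simp [hv])
    exact mul_mem (mul_mem this (cpow_mem_unitary hc (by simp [hv]))) this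
  have hX : cpow (Ψ ρ) (κ * v / 2) ∈ unitary (Matrix m m ℂ) :=
    cpow_mem_unitary hΨρ (by simp [hv])
  have hcomm : Commute (cpow (Ψ ρ) (κ * v / 2)) (Λ 1) := by
    rw [hΛ_one, ← cpow_ofReal hΨρ]
    exact commute_cpow _ _ _
  have := norm_trace_map_unitary_mul_cpow_le hΛ hV hX hcomm hb (p * (1 + v))
  rwa [hΛ_apply, ← interpolant_one_add hρ hΨρ, hΛ_one, Complex.re_ofReal_mul, hw, mul_one] at this

lemma interpolant_inv (hρ : ρ.PosDef) (hΨρ : (Ψ ρ).PosDef) (hb : b.PosDef) (hc : c.PosDef)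
    (κ : ℝ) {p : ℝ} (hp : p ≠ 0)
    (hc_eq : c = mpow ρ (1 / (2 * p)) *
      traceAdjoint Ψ (mpow (Ψ ρ) (κ / (2 * p)) * b * mpow (Ψ ρ) (κ / (2 * p))) *
      mpow ρ (1 / (2 * p))) :
    interpolant Ψ ρ c b κ p (p⁻¹ : ℝ) = tracePow c p := by
  set s := mpow (Ψ ρ) (κ / (2 * p)) with s_def
  set r := mpow ρ (1 / (2 * p)) with r_def
  have hs : cpow (Ψ ρ) (κ * (p⁻¹ : ℝ) / 2) = s := by
    rw [s_def, ← cpow_ofReal hΨρ]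
    push_cast
    ring_nf
  have hr : cpow ρ ((p⁻¹ : ℝ) / 2) = r := by
    rw [r_def, ← cpow_ofReal hρ]
    push_cast
    ring_nf
  have hb₁ : cpow b (p * (p⁻¹ : ℝ)) = b := by
    rw [← Complex.ofReal_mul, cpow_ofReal hb, mul_inv_cancel₀ hp, mpow_one hb.1]
  have hc₁ : cpow c (p - p * (p⁻¹ : ℝ)) = mpow c (p - 1) := by
    rw [← Complex.ofReal_mul, ← Complex.ofReal_sub, cpow_ofReal hc, mul_inv_cancel₀ hp]
  calc interpolant Ψ ρ c b κ p (p⁻¹ : ℝ)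
      = (traceAdjoint Ψ (s * b * s) * (r * mpow c (p - 1) * r)).trace := by
        rw [interpolant, hs, hr, hb₁, hc₁]
    _ = (c * mpow c (p - 1)).trace := by
        rw [← mul_assoc, trace_mul_comm]
        nth_rewrite 2 [hc_eq]
        noncomm_ring
    _ = tracePow c p := by
        nth_rewrite 1 [← mpow_one hc.1]
        rw [← mpow_add hc, add_sub_cancel, trace_mpow]

lemma le_of_le_rpow_mul_rpow {x y θ : ℝ} (hx : 0 ≤ x) (hy : 0 ≤ y) (hθ : 0 < θ)
    (h : x ≤ x ^ (1 - θ) * y ^ θ) : x ≤ y := by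
  rcases hx.eq_or_lt with rfl | hx'
  · exact hy
  have split : x ^ (1 - θ) * x ^ θ = x := by
    rw [← Real.rpow_add hx', sub_add_cancel, Real.rpow_one]
  have : x ^ θ ≤ y ^ θ := le_of_mul_le_mul_left (split.trans_le h) (Real.rpow_pos_of_pos hx' _)
  exact (Real.rpow_le_rpow_iff hx hy hθ).1 this

/-- A positive-map form of the Araki–Lieb–Thirring inequality. -/
theorem tracePow_traceAdjoint_le (hΨ : IsPositiveTracePreserving Ψ) (hρ : ρ.PosDef)
    (hΨρ : (Ψ ρ).PosDef) (hb : b.PosDef) (κ : ℝ) {p : ℝ} (hp : 1 ≤ p) :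
    tracePow (mpow ρ (1 / (2 * p)) *
        traceAdjoint Ψ (mpow (Ψ ρ) (κ / (2 * p)) * b * mpow (Ψ ρ) (κ / (2 * p))) *
        mpow ρ (1 / (2 * p))) p ≤
      (mpow (Ψ ρ) (1 + κ) * mpow b p).trace.re := by
  have hp₀ : 0 < p := by linarith
  set s := mpow (Ψ ρ) (κ / (2 * p))
  set r := mpow ρ (1 / (2 * p))
  set c := r * traceAdjoint Ψ (s * b * s) * r with c_def
  have hc : c.PosDef := posDef_mpow_mul_mul_mpow hρ
    (posDef_traceAdjoint hΨ (posDef_mpow_mul_mul_mpow hΨρ hb _)) _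
  have value := interpolant_inv hρ hΨρ hb hc κ hp₀.ne' c_def
  have interp := (stripBounded_interpolant hρ hΨρ hb hc κ p).norm_le_interp
    (fun _ => norm_interpolant_le_of_re_eq_zero hΨ hρ hΨρ hb hc κ p)
    (fun _ => norm_interpolant_le_of_re_eq_one hΨ hρ hΨρ hb hc κ p)
    ⟨inv_nonneg.2 hp₀.le, inv_le_one_of_one_le₀ hp⟩
  rw [value, Complex.norm_of_nonneg (tracePow_nonneg hc.posSemidef p)] at interp
  exact le_of_le_rpow_mul_rpow (tracePow_nonneg hc.posSemidef p) (re_trace_mul_nonneg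
    (posSemidef_mpow hΨρ.posSemidef _) (posSemidef_mpow hb.posSemidef _)) (inv_pos.2 hp₀) interp

end Interpolation

section ArakiLiebThirring

variable {n m : Type*} [Fintype n] [DecidableEq n] [Fintype m] [DecidableEq m]

theorem araki_lieb_thirring {A B : Matrix n n ℂ} (hA : A.PosDef) (hB : B.PosDef) {q : ℝ}
    (hq : 1 ≤ q) :
    tracePow (mpow A (1 / 2) * B * mpow A (1 / 2)) q ≤ (mpow A q * mpow B q).trace.re := by
  have hq₀ : q ≠ 0 := by linarith
  have hAq := posDef_mpow hA q
  have hid : IsPositiveTracePreserving (LinearMap.id : Matrix n n ℂ →ₗ[ℂ] Matrix n n ℂ) :=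
    ⟨fun _ hX => hX, fun _ => rfl⟩
  have := tracePow_traceAdjoint_le hid hAq hAq hB 0 hq
  have half : q * (1 / (2 * q)) = 1 / 2 := by field_simp
  rwa [LinearMap.id_apply, zero_div, mpow_zero hAq.1, one_mul, mul_one, traceAdjoint_id, add_zero,
    mpow_one hAq.1, mpow_mpow hA.posSemidef, half] at this

/-- The Schatten norm `‖ρ^(1/2p) Ψ*(a) ρ^(1/2p)‖_p` does not increase when `Ψ` is applied to `ρ`
instead: the noncommutative `L^p`-space contractivity of `Ψ*`. -/
theorem tracePow_traceAdjoint_le_tracePow {Ψ : Matrix n n ℂ →ₗ[ℂ] Matrix m m ℂ}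
    (hΨ : IsPositiveTracePreserving Ψ) {ρ : Matrix n n ℂ} (hρ : ρ.PosDef) (hΨρ : (Ψ ρ).PosDef)
    {a : Matrix m m ℂ} (ha : a.PosDef) {p : ℝ} (hp : 1 ≤ p) :
    tracePow (mpow ρ (1 / (2 * p)) * traceAdjoint Ψ a * mpow ρ (1 / (2 * p))) p ≤
      tracePow (mpow (Ψ ρ) (1 / (2 * p)) * a * mpow (Ψ ρ) (1 / (2 * p))) p := by
  set s := mpow (Ψ ρ) (1 / (2 * p)) with s_def
  have hb : (s * a * s).PosDef := posDef_mpow_mul_mul_mpow hΨρ ha _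
  have := tracePow_traceAdjoint_le hΨ hρ hΨρ hb (-1) hp
  have cancel : mpow (Ψ ρ) (-1 / (2 * p)) * (s * a * s) * mpow (Ψ ρ) (-1 / (2 * p)) = a := by
    have left : mpow (Ψ ρ) (-1 / (2 * p)) * s = 1 := by
      rw [s_def, ← mpow_add hΨρ, ← add_div, neg_add_cancel, zero_div, mpow_zero hΨρ.1]
    have right : s * mpow (Ψ ρ) (-1 / (2 * p)) = 1 := by
      rw [s_def, ← mpow_add hΨρ, ← add_div, add_neg_cancel, zero_div, mpow_zero hΨρ.1]
    calc _ = (mpow (Ψ ρ) (-1 / (2 * p)) * s) * a * (s * mpow (Ψ ρ) (-1 / (2 * p))) := by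
          noncomm_ring
      _ = a := by rw [left, right, one_mul, mul_one]
  rwa [cancel, add_neg_cancel, mpow_zero hΨρ.1, one_mul] at this

end ArakiLiebThirring

section HolderYoung

variable {n : Type*} [Fintype n] [DecidableEq n] {α z : ℝ} {A B : Matrix n n ℂ}

lemma tracePow_mul_le_of_one_le (hA : A.PosDef) (hB : B.PosDef) (hα₀ : 0 < α) (hα₁ : α < 1)
    (hz : 1 ≤ z) :
    tracePow (mpow B (1 / 2) * A * mpow B (1 / 2)) z ≤
      α * tracePow A (z / α) + (1 - α) * tracePow B (z / (1 - α)) := by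
  have hα' : 0 < 1 - α := sub_pos.2 hα₁
  have young := re_trace_mpow_mul_mpow_le hA hB hα₀.le hα'.le (add_sub_cancel α 1) (z / α)
    (z / (1 - α))
  rw [div_mul_cancel₀ _ hα₀.ne', div_mul_cancel₀ _ hα'.ne', trace_mul_comm] at young
  exact (araki_lieb_thirring hB hA hz).trans young

/-- For `z ≤ 1` the function `x ↦ x ^ z` is concave, and the reverse Young inequality linearizes
it in `c = B^(1/2) A B^(1/2)`. -/
lemma tracePow_mul_le_of_le_one (hA : A.PosDef) (hB : B.PosDef) (hα₀ : 0 < α) (hα₁ : α < 1)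
    (hαz : α ≤ z) (hz : z ≤ 1) :
    tracePow (mpow B (1 / 2) * A * mpow B (1 / 2)) z ≤
      α * tracePow A (z / α) + (1 - α) * tracePow B (z / (1 - α)) := by
  have hα' : 0 < 1 - α := sub_pos.2 hα₁
  have hz₀ : 0 < z := hα₀.trans_le hαz
  set c := mpow B (1 / 2) * A * mpow B (1 / 2) with c_def
  have hc : c.PosDef := posDef_mpow_mul_mul_mpow hB hA _
  have reverse_young := add_le_re_trace_mpow_mul_mpow hc hB (w := 1 / z)
    (by rwa [le_div_iff₀ hz₀, one_mul]) z (z / (1 - α))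
  have pairing : (mpow c (z * (1 / z)) * mpow B (z / (1 - α) * (1 - 1 / z))).trace.re =
      (mpow A (z / α * (α / z)) * mpow B (z / (1 - α) * (1 - α / z))).trace.re := by
    have exponent : z / (1 - α) * (1 - α / z) = 1 / 2 + z / (1 - α) * (1 - 1 / z) + 1 / 2 := by
      field_simp
      ring
    rw [mul_one_div_cancel hz₀.ne', mpow_one hc.1, show z / α * (α / z) = 1 by field_simp,
      mpow_one hA.1, exponent, mpow_add hB, mpow_add hB, c_def, mul_assoc, mul_assoc,
      trace_mul_comm]
    noncomm_ring
  have young := re_trace_mpow_mul_mpow_le hA hB (w₁ := α / z) (w₂ := 1 - α / z) (by positivity)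
    (by rw [sub_nonneg, div_le_one hz₀]; exact hαz) (by ring) (z / α) (z / (1 - α))
  rw [pairing] at reverse_young
  have : 1 / z * tracePow c z ≤
      1 / z * (α * tracePow A (z / α) + (1 - α) * tracePow B (z / (1 - α))) := by
    linear_combination reverse_young + young
  exact le_of_mul_le_mul_left this (by positivity)

lemma tracePow_mul_le_add (hA : A.PosDef) (hB : B.PosDef) (hα₀ : 0 < α) (hα₁ : α < 1)
    (hαz : α ≤ z) :
    tracePow (mpow B (1 / 2) * A * mpow B (1 / 2)) z ≤
      α * tracePow A (z / α) + (1 - α) * tracePow B (z / (1 - α)) :=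
  (le_total 1 z).elim (tracePow_mul_le_of_one_le hA hB hα₀ hα₁)
    (tracePow_mul_le_of_le_one hA hB hα₀ hα₁ hαz)

/-- Compare `σ^v ρ^(2u) σ^v` with `A = g^(1/2) ρ^(2u) g^(1/2)` and `B = g^(-1/2) σ^(2v) g^(-1/2)`:
it has the spectrum of `B^(1/2) A B^(1/2)`. -/
theorem Qaz_le_add {ρ σ g : Matrix n n ℂ} (hρ : ρ.PosDef) (hσ : σ.PosDef) (hg : g.PosDef)
    (hα₀ : 0 < α) (hα₁ : α < 1) (hαz : α ≤ z) :
    Qaz α z ρ σ ≤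
      α * tracePow (mpow ρ (α / (2 * z)) * g * mpow ρ (α / (2 * z))) (z / α) +
        (1 - α) * tracePow (mpow σ ((1 - α) / (2 * z)) * g⁻¹ * mpow σ ((1 - α) / (2 * z)))
          (z / (1 - α)) := by
  set u := α / (2 * z) with u_def
  set v := (1 - α) / (2 * z)
  set A := mpow g (1 / 2) * mpow ρ (2 * u) * mpow g (1 / 2) with A_def
  set B := mpow g (-1 / 2) * mpow σ (2 * v) * mpow g (-1 / 2) with B_def
  have hA : A.PosDef := posDef_mpow_mul_mul_mpow hg (posDef_mpow hρ _) _
  have hB : B.PosDef := posDef_mpow_mul_mul_mpow hg (posDef_mpow hσ _) _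
  have tracePow_A : tracePow A (z / α) = tracePow (mpow ρ u * g * mpow ρ u) (z / α) := by
    rw [A_def, tracePow_mpow_mul_mpow_mul_mpow hg hρ, mul_one_div_cancel two_ne_zero, mpow_one hg.1]
  have tracePow_B :
      tracePow B (z / (1 - α)) = tracePow (mpow σ v * g⁻¹ * mpow σ v) (z / (1 - α)) := by
    rw [B_def, tracePow_mpow_mul_mpow_mul_mpow hg hσ, mul_div_cancel₀ _ two_ne_zero, inv_eq_mpow hg]
  have cancel : mpow g (1 / 2) * mpow g (-1 / 2) = 1 := by
    rw [← mpow_add hg, ← add_div, add_neg_cancel, zero_div, mpow_zero hg.1]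
  have same_charpoly : (mpow σ v * mpow ρ (2 * u) * mpow σ v).charpoly =
      (mpow B (1 / 2) * A * mpow B (1 / 2)).charpoly := by
    calc (mpow σ v * mpow ρ (2 * u) * mpow σ v).charpoly
        = (mpow ρ (2 * u) * mpow σ (2 * v)).charpoly := by
          rw [charpoly_mpow_mul_mul_mpow hσ, charpoly_mul_comm]
      _ = (mpow ρ (2 * u) * mpow σ (2 * v) * (mpow g (-1 / 2) * mpow g (1 / 2))).charpoly := by
          rw [mul_eq_one_comm.1 cancel, mul_one]
      _ = (mpow g (1 / 2) * (mpow ρ (2 * u) * 1 * mpow σ (2 * v) * mpow g (-1 / 2))).charpoly := by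
          rw [charpoly_mul_comm (mpow g (1 / 2)), mul_one]
          noncomm_ring
      _ = (A * B).charpoly := by
          rw [← cancel, A_def, B_def]
          noncomm_ring
      _ = (mpow B (1 / 2) * A * mpow B (1 / 2)).charpoly := by
          rw [charpoly_mpow_mul_mul_mpow hB, mul_one_div_cancel two_ne_zero, mpow_one hB.1,
            charpoly_mul_comm]
  rw [← tracePow_A, ← tracePow_B]
  refine Eq.trans_le ?_ (tracePow_mul_le_add hA hB hα₀ hα₁ hαz)
  rw [Qaz, show α / z = 2 * u by rw [u_def]; ring]
  exact tracePow_eq_of_charpoly_eq (posDef_mpow_mul_mul_mpow hσ (posDef_mpow hρ _) _).1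
    (posDef_mpow_mul_mul_mpow hB hA _).1 same_charpoly z

end HolderYoung

section PositiveDefinite

variable {n m : Type*} [Fintype n] [DecidableEq n] [Fintype m] [DecidableEq m] {α z : ℝ}

/-- The point at which the variational bound `Qaz_le_add` is attained. -/
noncomputable def optimalPoint (α z : ℝ) (ρ σ : Matrix n n ℂ) : Matrix n n ℂ :=
  mpow σ ((1 - α) / (2 * z)) *
    mpow (mpow σ ((1 - α) / (2 * z)) * mpow ρ (α / z) * mpow σ ((1 - α) / (2 * z))) (α - 1) *
    mpow σ ((1 - α) / (2 * z))

lemma posDef_optimalPoint {ρ σ : Matrix n n ℂ} (hρ : ρ.PosDef) (hσ : σ.PosDef) :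
    (optimalPoint α z ρ σ).PosDef :=
  posDef_mpow_mul_mul_mpow hσ
    (posDef_mpow (posDef_mpow_mul_mul_mpow hσ (posDef_mpow hρ _) _) _) _

lemma tracePow_mul_mpow_mul {ρ s d : Matrix n n ℂ} (hρ : ρ.PosDef) (hs : s.IsHermitian)
    (hd : d.PosDef) {u : ℝ} (h : s * mpow ρ (2 * u) * s = d) (β t : ℝ) :
    tracePow (mpow ρ u * (s * mpow d (2 * β) * s) * mpow ρ u) t =
      tracePow d ((2 * β + 1) * t) := by
  obtain ⟨X, X_eq⟩ : ∃ X, X = mpow ρ u * s * mpow d β := ⟨_, rfl⟩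
  have conjTranspose_X : Xᴴ = mpow d β * s * mpow ρ u := by
    rw [X_eq, conjTranspose_mul, conjTranspose_mul, (isHermitian_mpow _ _).eq, hs.eq,
      (isHermitian_mpow _ _).eq, mul_assoc]
  have mul_conj : mpow ρ u * (s * mpow d (2 * β) * s) * mpow ρ u = X * Xᴴ := by
    rw [conjTranspose_X, X_eq, two_mul, mpow_add hd]
    noncomm_ring
  have conj_mul : Xᴴ * X = mpow d (2 * β + 1) := by
    calc Xᴴ * X = mpow d β * (s * (mpow ρ u * mpow ρ u) * s) * mpow d β := by
          rw [conjTranspose_X, X_eq]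
          noncomm_ring
      _ = mpow d β * mpow d 1 * mpow d β := by
          rw [← mpow_add hρ, ← two_mul, h, mpow_one hd.1]
      _ = mpow d (2 * β + 1) := by
          rw [← mpow_add hd, ← mpow_add hd]
          ring_nf
  rw [mul_conj, tracePow_mul_conjTranspose, conj_mul, tracePow_mpow hd.posSemidef]

lemma tracePow_mul_optimalPoint_mul {ρ σ : Matrix n n ℂ} (hρ : ρ.PosDef) (hσ : σ.PosDef)
    (hα : α ≠ 0) :
    tracePow (mpow ρ (α / (2 * z)) * optimalPoint α z ρ σ * mpow ρ (α / (2 * z))) (z / α) =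
      Qaz α z ρ σ := by
  have double : α / z = 2 * (α / (2 * z)) := by ring
  have exponent : (2 * ((α - 1) / 2) + 1) * (z / α) = z := by
    field_simp
    ring
  have := tracePow_mul_mpow_mul hρ (isHermitian_mpow σ ((1 - α) / (2 * z)))
    (posDef_mpow_mul_mul_mpow hσ (posDef_mpow hρ (2 * (α / (2 * z)))) _) rfl ((α - 1) / 2) (z / α)
  rwa [exponent, mul_div_cancel₀ _ two_ne_zero, ← double] at this

lemma tracePow_mul_optimalPoint_inv_mul {ρ σ : Matrix n n ℂ} (hρ : ρ.PosDef) (hσ : σ.PosDef)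
    (hα : α ≠ 1) :
    tracePow (mpow σ ((1 - α) / (2 * z)) * (optimalPoint α z ρ σ)⁻¹ * mpow σ ((1 - α) / (2 * z)))
      (z / (1 - α)) = Qaz α z ρ σ := by
  rw [Qaz, optimalPoint]
  set s := mpow σ ((1 - α) / (2 * z))
  set d := s * mpow ρ (α / z) * s
  have hd : d.PosDef := posDef_mpow_mul_mul_mpow hσ (posDef_mpow hρ _) _
  have hs : IsUnit s.det := (isUnit_iff_isUnit_det s).1 (posDef_mpow hσ _).isUnit
  have cancel : s * (s * mpow d (α - 1) * s)⁻¹ * s = mpow d (1 - α) := by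
    rw [Matrix.mul_inv_rev, Matrix.mul_inv_rev, mul_nonsing_inv_cancel_left _ _ hs,
      nonsing_inv_mul_cancel_right _ _ hs, inv_eq_mpow (posDef_mpow hd _),
      mpow_mpow hd.posSemidef, mul_neg_one, neg_sub]
  rw [cancel, tracePow_mpow hd.posSemidef, mul_div_cancel₀ _ (sub_ne_zero.2 hα.symm), tracePow]

lemma tracePow_mul_inv_traceAdjoint_mul_le {Ψ : Matrix n n ℂ →ₗ[ℂ] Matrix m m ℂ}
    (hΨ : IsPositiveTracePreserving Ψ) {σ : Matrix n n ℂ} (hσ : σ.PosDef) (hΨσ : (Ψ σ).PosDef)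
    {a : Matrix m m ℂ} (ha : a.PosDef) {q : ℝ} (hq : 1 ≤ q) :
    tracePow (mpow σ (1 / (2 * q)) * (traceAdjoint Ψ a)⁻¹ * mpow σ (1 / (2 * q))) q ≤
      tracePow (mpow (Ψ σ) (1 / (2 * q)) * a⁻¹ * mpow (Ψ σ) (1 / (2 * q))) q := by
  refine le_trans ?_ (tracePow_traceAdjoint_le_tracePow hΨ hσ hΨσ ha.inv hq)
  refine tracePow_le_tracePow (posDef_mpow_mul_mul_mpow hσ (posDef_traceAdjoint hΨ ha).inv _)
    (posDef_mpow_mul_mul_mpow hσ (posDef_traceAdjoint hΨ ha.inv) _) ?_ hq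
  rw [← sub_mul, ← mul_sub]
  exact posSemidef_mpow_mul_mul_mpow σ
    (posSemidef_map_inv_sub_inv_map (fun _ => posSemidef_traceAdjoint hΨ) (traceAdjoint_one hΨ) ha)
    _

theorem Qaz_le_Qaz_map_of_posDef {Ψ : Matrix n n ℂ →ₗ[ℂ] Matrix m m ℂ}
    (hΨ : IsPositiveTracePreserving Ψ) {ρ σ : Matrix n n ℂ} (hρ : ρ.PosDef) (hσ : σ.PosDef)
    (hΨρ : (Ψ ρ).PosDef) (hΨσ : (Ψ σ).PosDef) (hα₀ : 0 < α) (hα₁ : α < 1)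
    (hz : max α (1 - α) ≤ z) : Qaz α z ρ σ ≤ Qaz α z (Ψ ρ) (Ψ σ) := by
  obtain ⟨hαz, hαz'⟩ := max_le_iff.1 hz
  have hα' : 0 < 1 - α := sub_pos.2 hα₁
  set a := optimalPoint α z (Ψ ρ) (Ψ σ)
  have ha : a.PosDef := posDef_optimalPoint hΨρ hΨσ
  have left := tracePow_traceAdjoint_le_tracePow hΨ hρ hΨρ ha (p := z / α) ((one_le_div hα₀).2 hαz)
  have right := tracePow_mul_inv_traceAdjoint_mul_le hΨ hσ hΨσ ha (q := z / (1 - α))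
    ((one_le_div hα').2 hαz')
  have exponent (β : ℝ) : 1 / (2 * (z / β)) = β / (2 * z) := by rw [mul_div_assoc', one_div_div]
  rw [exponent, tracePow_mul_optimalPoint_mul hΨρ hΨσ hα₀.ne'] at left
  rw [exponent, tracePow_mul_optimalPoint_inv_mul hΨρ hΨσ hα₁.ne] at right
  linarith [Qaz_le_add hρ hσ (posDef_traceAdjoint hΨ ha) hα₀ hα₁ hαz,
    mul_le_mul_of_nonneg_left left hα₀.le, mul_le_mul_of_nonneg_left right hα'.le]

end PositiveDefinite

section Depolarize

variable {n m : Type*} [Fintype n] [Fintype m] [DecidableEq m]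
  {Ψ : Matrix n n ℂ →ₗ[ℂ] Matrix m m ℂ}

/-- The mixture of `Ψ` and the completely depolarizing map with weights `1 - ε` and `ε`. -/
noncomputable def depolarize (Ψ : Matrix n n ℂ →ₗ[ℂ] Matrix m m ℂ) (ε : ℝ) :
    Matrix n n ℂ →ₗ[ℂ] Matrix m m ℂ :=
  ((1 - ε : ℝ) : ℂ) • Ψ +
    (traceLinearMap n ℂ ℂ).smulRight (((ε / Fintype.card m : ℝ) : ℂ) • (1 : Matrix m m ℂ))

lemma depolarize_apply (Ψ : Matrix n n ℂ →ₗ[ℂ] Matrix m m ℂ) (ε : ℝ) (A : Matrix n n ℂ) :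
    depolarize Ψ ε A = ((1 - ε : ℝ) : ℂ) • Ψ A +
      A.trace • (((ε / Fintype.card m : ℝ) : ℂ) • (1 : Matrix m m ℂ)) :=
  rfl

lemma depolarize_zero (Ψ : Matrix n n ℂ →ₗ[ℂ] Matrix m m ℂ) : depolarize Ψ 0 = Ψ := by
  ext1 A
  simp [depolarize_apply]

lemma IsPositiveTracePreserving.depolarize [Nonempty m] (hΨ : IsPositiveTracePreserving Ψ) {ε : ℝ}
    (hε : ε ∈ Set.Icc (0 : ℝ) 1) : IsPositiveTracePreserving (depolarize Ψ ε) where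
  map_posSemidef A hA := by
    have hmix : (0 : ℂ) ≤ (1 - ε : ℝ) := by exact_mod_cast sub_nonneg.2 hε.2
    have hweight : (0 : ℂ) ≤ (ε / Fintype.card m : ℝ) := by
      exact_mod_cast div_nonneg hε.1 (Nat.cast_nonneg _)
    exact ((hΨ.map_posSemidef A hA).smul hmix).add
      ((PosSemidef.one.smul hweight).smul hA.trace_nonneg)
  trace_map A := by
    rw [depolarize_apply, trace_add, trace_smul, trace_smul, trace_smul, hΨ.trace_map, trace_one]
    have : (Fintype.card m : ℂ) ≠ 0 := Nat.cast_ne_zero.2 Fintype.card_ne_zero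
    simp only [smul_eq_mul]
    push_cast
    field_simp
    ring

lemma posDef_depolarize [Nonempty n] [Nonempty m] (hΨ : IsPositiveTracePreserving Ψ) {ε : ℝ}
    (hε : ε ∈ Set.Ioc (0 : ℝ) 1) {A : Matrix n n ℂ} (hA : A.PosDef) :
    (depolarize Ψ ε A).PosDef := by
  have hmix : (0 : ℂ) ≤ (1 - ε : ℝ) := by exact_mod_cast sub_nonneg.2 hε.2
  have hweight : (0 : ℂ) < (ε / Fintype.card m : ℝ) := by
    exact_mod_cast div_pos hε.1 (Nat.cast_pos.2 Fintype.card_pos)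
  exact .posSemidef_add ((hΨ.map_posSemidef A hA.posSemidef).smul hmix)
    ((PosDef.one.smul hweight).smul hA.trace_pos)

lemma continuous_depolarize (Ψ : Matrix n n ℂ →ₗ[ℂ] Matrix m m ℂ) {A : ℝ → Matrix n n ℂ}
    (hA : Continuous A) : Continuous fun ε => depolarize Ψ ε (A ε) := by
  have hΨ : Continuous Ψ := Ψ.continuous_of_finiteDimensional
  have hmix : Continuous fun ε : ℝ => ((1 - ε : ℝ) : ℂ) := by fun_prop
  have hweight : Continuous fun ε : ℝ => ((ε / Fintype.card m : ℝ) : ℂ) := by fun_prop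
  exact (hmix.smul (hΨ.comp hA)).add (hA.matrix_trace.smul (hweight.smul continuous_const))

end Depolarize

section Regularization

variable {n m : Type*} [Fintype n] [DecidableEq n] [Fintype m] [DecidableEq m] {α z : ℝ}

lemma continuousOn_mpow {X : Type*} [TopologicalSpace X] {s : Set X} {A : X → Matrix n n ℂ}
    (hA : ContinuousOn A s) (hA_herm : ∀ x ∈ s, (A x).IsHermitian) {t : ℝ} (ht : 0 ≤ t) :
    ContinuousOn (fun x => mpow (A x) t) s := by
  refine ContinuousOn.congr ?_ fun x hx => mpow_eq_cfc (hA_herm x hx) t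
  exact ContinuousOn.cfc_of_mem_nhdsSet (s := Set.univ) _ Filter.univ_mem hA hA_herm
    (Real.continuous_rpow_const ht).continuousOn

lemma continuousOn_Qaz {X : Type*} [TopologicalSpace X] {s : Set X} {A B : X → Matrix n n ℂ}
    (hA : ContinuousOn A s) (hB : ContinuousOn B s) (hA_psd : ∀ x ∈ s, (A x).PosSemidef)
    (hB_psd : ∀ x ∈ s, (B x).PosSemidef) (hα₀ : 0 ≤ α) (hα₁ : α ≤ 1) (hz : 0 ≤ z) :
    ContinuousOn (fun x => Qaz α z (A x) (B x)) s := by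
  have hA_pow := continuousOn_mpow hA (fun x hx => (hA_psd x hx).1) (t := α / z) (by positivity)
  have hB_pow := continuousOn_mpow hB (fun x hx => (hB_psd x hx).1) (t := (1 - α) / (2 * z))
    (div_nonneg (sub_nonneg.2 hα₁) (by positivity))
  have hAB := continuousOn_mpow ((hB_pow.mul hA_pow).mul hB_pow)
    (fun x hx => (posSemidef_mpow_mul_mul_mpow _ (posSemidef_mpow (hA_psd x hx) _) _).1) hz
  exact (Complex.continuous_re.comp continuous_id.matrix_trace).comp_continuousOn hAB

theorem Qaz_le_Qaz_map [Nonempty n] [Nonempty m] {Ψ : Matrix n n ℂ →ₗ[ℂ] Matrix m m ℂ}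
    (hΨ : IsPositiveTracePreserving Ψ) {ρ σ : Matrix n n ℂ} (hρ : ρ.PosSemidef)
    (hσ : σ.PosSemidef) (hα₀ : 0 < α) (hα₁ : α < 1) (hz : max α (1 - α) ≤ z) :
    Qaz α z ρ σ ≤ Qaz α z (Ψ ρ) (Ψ σ) := by
  have hz₀ : 0 ≤ z := hα₀.le.trans ((le_max_left _ _).trans hz)
  set P : Matrix n n ℂ → ℝ → Matrix n n ℂ := fun A ε => A + (ε : ℂ) • 1
  set R : Matrix n n ℂ → ℝ → Matrix m m ℂ := fun A ε => depolarize Ψ ε (P A ε)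
  have posDef_P {A : Matrix n n ℂ} (hA : A.PosSemidef) {ε : ℝ} (hε : 0 < ε) : (P A ε).PosDef :=
    .posSemidef_add hA (PosDef.one.smul (Complex.zero_lt_real.2 hε))
  have posSemidef_P {A : Matrix n n ℂ} (hA : A.PosSemidef) (ε : ℝ) (hε : ε ∈ Set.Icc (0 : ℝ) 1) :
      (P A ε).PosSemidef :=
    hA.add (PosSemidef.one.smul (Complex.zero_le_real.2 hε.1))
  have posSemidef_R {A : Matrix n n ℂ} (hA : A.PosSemidef) (ε : ℝ) (hε : ε ∈ Set.Icc (0 : ℝ) 1) :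
      (R A ε).PosSemidef :=
    (hΨ.depolarize hε).map_posSemidef _ (posSemidef_P hA ε hε)
  have continuous_P (A : Matrix n n ℂ) : Continuous (P A) := by fun_prop
  have continuous_R (A : Matrix n n ℂ) : Continuous (R A) :=
    continuous_depolarize Ψ (continuous_P A)
  have hmem : (0 : ℝ) ∈ Set.Icc (0 : ℝ) 1 := ⟨le_rfl, zero_le_one⟩
  have limit_P := continuousOn_Qaz (continuous_P ρ).continuousOn (continuous_P σ).continuousOn
    (posSemidef_P hρ) (posSemidef_P hσ) hα₀.le hα₁.le hz₀ 0 hmem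
  have limit_R := continuousOn_Qaz (continuous_R ρ).continuousOn (continuous_R σ).continuousOn
    (posSemidef_R hρ) (posSemidef_R hσ) hα₀.le hα₁.le hz₀ 0 hmem
  have closure_mem : (0 : ℝ) ∈ closure (Set.Ioo (0 : ℝ) 1) := by
    rwa [closure_Ioo zero_ne_one]
  have := ContinuousWithinAt.closure_le closure_mem (limit_P.mono Set.Ioo_subset_Icc_self)
    (limit_R.mono Set.Ioo_subset_Icc_self) fun ε hε =>
      have hε' := Set.Ioo_subset_Ioc_self hε
      Qaz_le_Qaz_map_of_posDef (hΨ.depolarize (Set.Ioo_subset_Icc_self hε)) (posDef_P hρ hε.1)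
        (posDef_P hσ hε.1) (posDef_depolarize hΨ hε' (posDef_P hρ hε.1))
        (posDef_depolarize hΨ hε' (posDef_P hσ hε.1)) hα₀ hα₁ hz
  simpa [P, R, depolarize_zero] using this

lemma Qaz_zero_left (hα : α ≠ 0) (hz : z ≠ 0) (σ : Matrix n n ℂ) : Qaz α z 0 σ = 0 := by
  have mpow_zero_left {t : ℝ} (ht : t ≠ 0) : mpow (0 : Matrix n n ℂ) t = 0 := by
    rw [mpow_eq_cfc isHermitian_zero, cfc_apply_zero, Real.zero_rpow ht, map_zero]
  rw [Qaz, mpow_zero_left (div_ne_zero hα hz), mul_zero, zero_mul, mpow_zero_left hz, trace_zero,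
    Complex.zero_re]

end Regularization

end QuantumRenyi

open QuantumRenyi in
theorem Qaz_DPI_general {n m : Type*} [Fintype n] [DecidableEq n] [Fintype m] [DecidableEq m]
    {α z : ℝ} (hα₀ : 0 < α) (hα₁ : α < 1) (hz : max α (1 - α) ≤ z)
    {Ψ : Matrix n n ℂ →ₗ[ℂ] Matrix m m ℂ} (hΨ : IsPositiveTracePreserving Ψ)
    {ρ σ : Matrix n n ℂ} (hρ : ρ.PosSemidef) (hσ : σ.PosSemidef) :
    Qaz α z ρ σ ≤ Qaz α z (Ψ ρ) (Ψ σ) := by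
  obtain rfl | ρ_ne := eq_or_ne ρ 0
  · have hz₀ : z ≠ 0 := (hα₀.trans_le ((le_max_left _ _).trans hz)).ne'
    rw [map_zero, Qaz_zero_left hα₀.ne' hz₀, Qaz_zero_left hα₀.ne' hz₀]
  have nonempty_n : Nonempty n := by
    by_contra! _
    exact ρ_ne (Subsingleton.elim _ _)
  have nonempty_m : Nonempty m := by
    by_contra! _
    exact ρ_ne (hρ.trace_eq_zero_iff.1 ((hΨ.trace_map ρ).symm.trans (trace_eq_zero_of_isEmpty _)))
  exact Qaz_le_Qaz_map hΨ hρ hσ hα₀ hα₁ hz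

/-- Data processing inequality for `0 < α < 1` and `z ≥ max{α, 1−α}`:
if `Ψ` is a positive trace-preserving linear map, then
`Q_{α,z}(Ψρ‖Ψσ) ≥ Q_{α,z}(ρ‖σ)`. -/
theorem Qaz_DPI (n m : ℕ) (α z : ℝ) (hα0 : 0 < α) (hα1 : α < 1)
    (hz : max α (1 - α) ≤ z)
    (Ψ : Matrix (Fin n) (Fin n) ℂ →ₗ[ℂ] Matrix (Fin m) (Fin m) ℂ)
    (hΨpos : ∀ A : Matrix (Fin n) (Fin n) ℂ, A.PosSemidef → (Ψ A).PosSemidef)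
    (hΨtr : ∀ A : Matrix (Fin n) (Fin n) ℂ, (Ψ A).trace = A.trace)
    (ρ σ : Matrix (Fin n) (Fin n) ℂ) (hρ : ρ.PosSemidef) (hσ : σ.PosSemidef) :
    Qaz α z ρ σ ≤ Qaz α z (Ψ ρ) (Ψ σ) :=
  Qaz_DPI_general hα0 hα1 hz ⟨hΨpos, hΨtr⟩ hρ hσ
end

section
/- (Joint concavity.) Let 0 < α < 1 and z ≥ max{α, 1 − α}, and let λ ∈ [0, 1]. Then for all n×n positive semidefinite complex matrices ρ₁, ρ₂, σ₁, σ₂: Q_{α,z}(λρ₁ + (1−λ)ρ₂ ‖ λσ₁ + (1−λ)σ₂) ≥ λ · Q_{α,z}(ρ₁‖σ₁) + (1−λ) · Q_{α,z}(ρ₂‖σ₂). -/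
open Matrix
open scoped ComplexOrder

/-!
For commuting positive operators `L` and `R`, `Lᵖ R¹⁻ᵖ` is a positive superposition of parallel
sums `(L⁻¹ + (t R)⁻¹)⁻¹`, whose quadratic forms are infima of functions linear in `(L, R)`. With
`L` left and `R` right multiplication this gives Lieb's theorem: `Tr Aᵖ K B¹⁻ᵖ Kᴴ` is jointly
concave. Young's inequality for traces then turns it into Epstein's theorem, the concavity of
`A ↦ Tr (Kᴴ Aᵖ K)^(1/p)` for `0 < p ≤ 1`.

For invertible `ρ` and `σ`, writing `X = σ^((1-α)/2z) ρ^(α/2z) = P Q` and applying the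
arithmetic-geometric mean and Young inequalities to the polar decomposition of `X` bounds
`Q_{α,z}(ρ‖σ) = Tr (X Xᴴ)^z` by `(1-α) Tr (Pᴴ P)^(z/(1-α)) + α Tr (Q Qᴴ)^(z/α)`, with equality for
`P = (X Xᴴ)^((1-α)/2)`. Parametrizing `P = σ^((1-α)/2z) K` and `Q = K⁻¹ ρ^(α/2z)` makes `Q_{α,z}` an
infimum over invertible `K` of sums of Epstein functionals of `σ` and `ρ`, hence jointly concave.
Singular `ρ` and `σ` follow by continuity.
-/

section Convexity

open MeasureTheory

variable {E : Type*} [AddCommMonoid E] [Module ℝ E] {s : Set E} {f : E → ℝ}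

theorem concaveOn_of_isGLB {ι : Type*} {F : ι → E → ℝ} (hs : Convex ℝ s)
    (hF : ∀ i, ConcaveOn ℝ s (F i)) (hf : ∀ x ∈ s, IsGLB (Set.range fun i => F i x) (f x)) :
    ConcaveOn ℝ s f := by
  refine ⟨hs, fun x hx y hy a b ha hb hab => (hf _ (hs hx hy ha hb hab)).2 ?_⟩
  rintro _ ⟨i, rfl⟩
  calc a • f x + b • f y ≤ a • F i x + b • F i y := by
        gcongr
        · exact (hf x hx).1 ⟨i, rfl⟩
        · exact (hf y hy).1 ⟨i, rfl⟩
    _ ≤ F i (a • x + b • y) := (hF i).2 hx hy ha hb hab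

theorem concaveOn_setIntegral {T : Type*} [MeasurableSpace T] {μ : Measure T} {S : Set T}
    {F : T → E → ℝ} (hs : Convex ℝ s) (hS : MeasurableSet S)
    (hF : ∀ t ∈ S, ConcaveOn ℝ s (F t)) (hint : ∀ x ∈ s, IntegrableOn (F · x) S μ) :
    ConcaveOn ℝ s fun x => ∫ t in S, F t x ∂μ := by
  refine ⟨hs, fun x hx y hy a b ha hb hab => ?_⟩
  have hx' := (hint x hx).smul a
  have hy' := (hint y hy).smul b
  calc a • ∫ t in S, F t x ∂μ + b • ∫ t in S, F t y ∂μ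
      = ∫ t in S, (a • F t x + b • F t y) ∂μ := by
        rw [← integral_smul, ← integral_smul]
        exact (integral_add hx' hy').symm
    _ ≤ ∫ t in S, F t (a • x + b • y) ∂μ :=
        setIntegral_mono_on (hx'.add hy') (hint _ (hs hx hy ha hb hab)) hS
          fun t ht => (hF t ht).2 hx hy ha hb hab

theorem concaveOn_of_subset_closure [TopologicalSpace E] [ContinuousAdd E]
    [ContinuousConstSMul ℝ E] {t : Set E} (hf : ConcaveOn ℝ t f) (hs : Convex ℝ s) (hts : t ⊆ s)
    (hst : s ⊆ closure t) (hcont : ContinuousOn f s) : ConcaveOn ℝ s f := by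
  refine ⟨hs, fun x hx y hy a b ha hb hab => ?_⟩
  have hcombo : ContinuousOn (fun p : E × E => a • p.1 + b • p.2) (s ×ˢ s) := by fun_prop
  have hlhs : ContinuousOn (fun p : E × E => a • f p.1 + b • f p.2) (s ×ˢ s) :=
    ((hcont.comp continuousOn_fst fun _ hp => hp.1).const_smul a).add
      ((hcont.comp continuousOn_snd fun _ hp => hp.2).const_smul b)
  have hrhs : ContinuousOn (fun p : E × E => f (a • p.1 + b • p.2)) (s ×ˢ s) :=
    hcont.comp hcombo fun _ hp => hs hp.1 hp.2 ha hb hab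
  have hmem : (x, y) ∈ closure (t ×ˢ t) := by
    rw [closure_prod_eq]
    exact ⟨hst hx, hst hy⟩
  have hsub : t ×ˢ t ⊆ s ×ˢ s := Set.prod_mono hts hts
  exact ContinuousWithinAt.closure_le hmem ((hlhs _ ⟨hx, hy⟩).mono hsub)
    ((hrhs _ ⟨hx, hy⟩).mono hsub) fun p hp => hf.2 hp.1 hp.2 ha hb hab

end Convexity

section Spectral

open scoped MatrixOrder

variable {m n : Type*} [Fintype m] [DecidableEq m] [Fintype n] [DecidableEq n]
  {A : Matrix m m ℂ} {B : Matrix n n ℂ}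

theorem mpow_eq_rpow (hA : 0 ≤ A) (t : ℝ) : mpow A t = A ^ t := by
  have hA' : A.IsHermitian := hA.posSemidef.isHermitian
  rw [CFC.rpow_eq_cfc_real, hA'.cfc_eq, mpow, dif_pos hA', Matrix.IsHermitian.cfc,
    Unitary.conjStarAlgAut_apply]
  rfl

theorem trace_cfc_eq_sum_eigenvalues (hA : A.IsHermitian) (f : ℝ → ℝ) :
    (cfc f A).trace = ∑ i, (f (hA.eigenvalues i) : ℂ) := by
  rw [hA.cfc_eq, Matrix.IsHermitian.cfc, Unitary.conjStarAlgAut_apply, Matrix.trace_mul_cycle,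
    Unitary.coe_star_mul_self, Matrix.one_mul, Matrix.trace_diagonal]
  rfl

theorem trace_cfc_mul_conjTranspose_self (X : Matrix n n ℂ) (f : ℝ → ℝ) :
    (cfc f (X * Xᴴ)).trace = (cfc f (Xᴴ * X)).trace := by
  have h := Matrix.isHermitian_mul_conjTranspose_self X
  have h' := Matrix.isHermitian_conjTranspose_mul_self X
  rw [trace_cfc_eq_sum_eigenvalues h, trace_cfc_eq_sum_eigenvalues h',
    (h.eigenvalues_eq_eigenvalues_iff h').2 (Matrix.charpoly_mul_comm _ _)]

theorem trace_rpow_mul_conjTranspose_self (X : Matrix n n ℂ) (t : ℝ) :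
    ((X * Xᴴ) ^ t).trace = ((Xᴴ * X) ^ t).trace := by
  rw [CFC.rpow_eq_cfc_real (Matrix.posSemidef_self_mul_conjTranspose X).nonneg,
    CFC.rpow_eq_cfc_real (Matrix.posSemidef_conjTranspose_mul_self X).nonneg,
    trace_cfc_mul_conjTranspose_self]

/-- The matrix of `K` with respect to the eigenbases of `A` (on the left) and `B` (on the right)
chosen by `Matrix.IsHermitian.eigenvectorUnitary`. -/
noncomputable def eigenCoords (hA : A.IsHermitian) (hB : B.IsHermitian) :
    Matrix m n ℂ ≃+ Matrix m n ℂ where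
  toFun K := star (hA.eigenvectorUnitary : Matrix m m ℂ) * K *
    (hB.eigenvectorUnitary : Matrix n n ℂ)
  invFun W := (hA.eigenvectorUnitary : Matrix m m ℂ) * W *
    star (hB.eigenvectorUnitary : Matrix n n ℂ)
  left_inv K := by
    beta_reduce
    rw [← Matrix.mul_assoc, ← Matrix.mul_assoc,
      Unitary.mul_star_self_of_mem hA.eigenvectorUnitary.2, Matrix.one_mul, Matrix.mul_assoc,
      Unitary.mul_star_self_of_mem hB.eigenvectorUnitary.2, Matrix.mul_one]
  right_inv W := by
    beta_reduce
    rw [← Matrix.mul_assoc, ← Matrix.mul_assoc,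
      Unitary.star_mul_self_of_mem hA.eigenvectorUnitary.2, Matrix.one_mul, Matrix.mul_assoc,
      Unitary.star_mul_self_of_mem hB.eigenvectorUnitary.2, Matrix.mul_one]
  map_add' K L := by rw [Matrix.mul_add, Matrix.add_mul]

/-- The sum of `|⟨uᵢ, K vⱼ⟩|² φ(aᵢ, bⱼ)` over eigenbases `u` of `A` and `v` of `B` with eigenvalues
`a` and `b`. It is the quadratic form at `K` of `φ` applied to the commuting operators of left
multiplication by `A` and right multiplication by `B`. -/
noncomputable def overlapSum (hA : A.IsHermitian) (hB : B.IsHermitian) (K : Matrix m n ℂ)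
    (φ : ℝ → ℝ → ℝ) : ℝ :=
  ∑ i, ∑ j, Complex.normSq (eigenCoords hA hB K i j) * φ (hA.eigenvalues i) (hB.eigenvalues j)

theorem trace_cfc_mul_mul_cfc_mul (hA : A.IsHermitian) (hB : B.IsHermitian) (K : Matrix m n ℂ)
    (f g : ℝ → ℝ) :
    (cfc f A * K * cfc g B * Kᴴ).trace.re = overlapSum hA hB K fun a b => f a * g b := by
  set U := (hA.eigenvectorUnitary : Matrix m m ℂ)
  set V := (hB.eigenvectorUnitary : Matrix n n ℂ)
  set D : Matrix m m ℂ := diagonal fun i => (f (hA.eigenvalues i) : ℂ)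
  set E : Matrix n n ℂ := diagonal fun j => (g (hB.eigenvalues j) : ℂ)
  have hf : cfc f A = U * D * star U := by
    rw [hA.cfc_eq, Matrix.IsHermitian.cfc, Unitary.conjStarAlgAut_apply]
    rfl
  have hg : cfc g B = V * E * star V := by
    rw [hB.cfc_eq, Matrix.IsHermitian.cfc, Unitary.conjStarAlgAut_apply]
    rfl
  set W : Matrix m n ℂ := eigenCoords hA hB K with hW
  have hdiag : (cfc f A * K * cfc g B * Kᴴ).trace = (D * W * E * Wᴴ).trace := by
    have hW' : W = star U * K * V := rfl
    rw [hf, hg, hW', Matrix.star_eq_conjTranspose, Matrix.star_eq_conjTranspose]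
    simp only [Matrix.conjTranspose_mul, Matrix.conjTranspose_conjTranspose]
    rw [Matrix.mul_assoc U, Matrix.mul_assoc U, Matrix.mul_assoc U, Matrix.mul_assoc U,
      Matrix.trace_mul_comm U]
    simp only [Matrix.mul_assoc]
  have hentry (i : m) (j : n) : (D * W * E) i j * Wᴴ j i =
      ((Complex.normSq (W i j) * (f (hA.eigenvalues i) * g (hB.eigenvalues j)) : ℝ) : ℂ) := by
    simp only [D, E, Matrix.mul_diagonal, Matrix.diagonal_mul, Matrix.conjTranspose_apply,
      Complex.ofReal_mul, Complex.normSq_eq_conj_mul_self, Complex.star_def]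
    ring
  rw [hdiag, overlapSum, ← hW]
  simp only [Matrix.trace, Matrix.diag_apply, Matrix.mul_apply (M := D * W * E), hentry,
    Complex.re_sum, Complex.ofReal_re]

theorem overlapSum_mono (hA : A.PosSemidef) (hB : B.PosSemidef) (K : Matrix m n ℂ)
    {φ ψ : ℝ → ℝ → ℝ} (h : ∀ a b, 0 ≤ a → 0 ≤ b → φ a b ≤ ψ a b) :
    overlapSum hA.1 hB.1 K φ ≤ overlapSum hA.1 hB.1 K ψ :=
  Finset.sum_le_sum fun i _ => Finset.sum_le_sum fun j _ =>
    mul_le_mul_of_nonneg_left (h _ _ (hA.eigenvalues_nonneg i) (hB.eigenvalues_nonneg j))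
      (Complex.normSq_nonneg _)

theorem overlapSum_congr (hA : A.PosSemidef) (hB : B.PosSemidef) (K : Matrix m n ℂ)
    {φ ψ : ℝ → ℝ → ℝ} (h : ∀ a b, 0 ≤ a → 0 ≤ b → φ a b = ψ a b) :
    overlapSum hA.1 hB.1 K φ = overlapSum hA.1 hB.1 K ψ :=
  le_antisymm (overlapSum_mono hA hB K fun a b ha hb => (h a b ha hb).le)
    (overlapSum_mono hA hB K fun a b ha hb => (h a b ha hb).ge)

theorem overlapSum_add (hA : A.IsHermitian) (hB : B.IsHermitian) (K : Matrix m n ℂ)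
    (φ ψ : ℝ → ℝ → ℝ) : overlapSum hA hB K (fun a b => φ a b + ψ a b) =
      overlapSum hA hB K φ + overlapSum hA hB K ψ := by
  simp only [overlapSum, mul_add, Finset.sum_add_distrib]

theorem overlapSum_const_mul (hA : A.IsHermitian) (hB : B.IsHermitian) (K : Matrix m n ℂ) (c : ℝ)
    (φ : ℝ → ℝ → ℝ) : overlapSum hA hB K (fun a b => c * φ a b) = c * overlapSum hA hB K φ := by
  simp only [overlapSum, Finset.mul_sum, mul_left_comm c]

theorem trace_mul_rpow_le {X Y : Matrix n n ℂ} (hX : 0 ≤ X) (hY : 0 ≤ Y) {p : ℝ}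
    (hp : p ∈ Set.Ioc 0 1) : (X * Y ^ (1 - p)).trace.re ≤
      p * (X ^ p⁻¹).trace.re + (1 - p) * Y.trace.re := by
  have hX' := hX.posSemidef
  have hY' := hY.posSemidef
  have overlap (f g : ℝ → ℝ) : (cfc f X * cfc g Y).trace.re =
      overlapSum hX'.1 hY'.1 1 fun a b => f a * g b := by
    simpa only [Matrix.mul_one, Matrix.conjTranspose_one] using
      trace_cfc_mul_mul_cfc_mul hX'.1 hY'.1 1 f g
  have hleft := overlap id fun b => b ^ (1 - p)
  have hX_pow := overlap (fun a => a ^ p⁻¹) fun _ => 1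
  have hY_id := overlap (fun _ => 1) id
  rw [cfc_id ℝ X, ← CFC.rpow_eq_cfc_real] at hleft
  rw [cfc_const_one ℝ Y, Matrix.mul_one, ← CFC.rpow_eq_cfc_real] at hX_pow
  rw [cfc_const_one ℝ X, Matrix.one_mul, cfc_id ℝ Y] at hY_id
  rw [hleft, hX_pow, hY_id, ← overlapSum_const_mul, ← overlapSum_const_mul, ← overlapSum_add]
  refine overlapSum_mono hX' hY' 1 fun a b ha hb => ?_
  have young := Real.geom_mean_le_arith_mean2_weighted hp.1.le (sub_nonneg.2 hp.2)
    (Real.rpow_nonneg ha p⁻¹) hb (by ring)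
  simpa only [id, mul_one, one_mul, Real.rpow_inv_rpow ha hp.1.ne'] using young

end Spectral

section Lieb

open MeasureTheory
open scoped MatrixOrder

variable {m n : Type*} [Fintype m] [Fintype n]

/-- The energy `Tr A M Mᴴ + t Tr (K - M) B (K - M)ᴴ` of the splitting `K = M + (K - M)`. -/
noncomputable def splittingEnergy (A : Matrix m m ℂ) (B : Matrix n n ℂ) (K : Matrix m n ℂ) (t : ℝ)
    (M : Matrix m n ℂ) : ℝ :=
  (A * M * Mᴴ).trace.re + t * ((K - M) * B * (K - M)ᴴ).trace.re

/-- The quadratic form at `K` of the parallel sum `(L⁻¹ + (t R)⁻¹)⁻¹`, where `L` is left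
multiplication by `A` and `R` is right multiplication by `B`. The variational formula used here
avoids inverses and exhibits the form as an infimum of functions linear in `(A, B)`. -/
noncomputable def parallelTrace (A : Matrix m m ℂ) (B : Matrix n n ℂ) (K : Matrix m n ℂ) (t : ℝ) :
    ℝ :=
  ⨅ M, splittingEnergy A B K t M

theorem concaveOn_splittingEnergy (K M : Matrix m n ℂ) (t : ℝ) :
    ConcaveOn ℝ (Set.Ici 0 ×ˢ Set.Ici 0)
      fun x : Matrix m m ℂ × Matrix n n ℂ => splittingEnergy x.1 x.2 K t M := by
  refine ⟨(convex_Ici 0).prod (convex_Ici 0), fun x _ y _ a b _ _ _ => le_of_eq ?_⟩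
  simp only [splittingEnergy, Prod.fst_add, Prod.snd_add, Prod.smul_fst, Prod.smul_snd,
    Matrix.add_mul, Matrix.mul_add, Matrix.smul_mul, Matrix.mul_smul, Matrix.trace_add,
    Matrix.trace_smul, Complex.add_re, Complex.smul_re, smul_eq_mul]
  ring

theorem normSq_mul_parallel_le {a b : ℝ} (ha : 0 ≤ a) (hb : 0 ≤ b) (w x : ℂ) :
    Complex.normSq w * (a * b / (a + b)) ≤
      Complex.normSq x * a + Complex.normSq (w - x) * b := by
  rcases (add_nonneg ha hb).eq_or_lt with hab | hab
  · rw [← hab, div_zero, mul_zero]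
    positivity [Complex.normSq_nonneg x, Complex.normSq_nonneg (w - x)]
  · rw [mul_div_assoc', div_le_iff₀ hab]
    simp only [Complex.normSq_apply, Complex.sub_re, Complex.sub_im]
    nlinarith [sq_nonneg (a * x.re - b * (w.re - x.re)), sq_nonneg (a * x.im - b * (w.im - x.im))]

theorem normSq_mul_parallel_eq {a b : ℝ} (ha : 0 ≤ a) (hb : 0 ≤ b) (w : ℂ) :
    Complex.normSq w * (a * b / (a + b)) = Complex.normSq (w * (b / (a + b) : ℝ)) * a +
      Complex.normSq (w - w * (b / (a + b) : ℝ)) * b := by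
  rcases (add_nonneg ha hb).eq_or_lt with hab | hab
  · obtain ⟨rfl, rfl⟩ := (add_eq_zero_iff_of_nonneg ha hb).1 hab.symm
    simp
  · have hsub : w - w * (b / (a + b) : ℝ) = w * (a / (a + b) : ℝ) := by
      rw [← mul_one_sub, ← Complex.ofReal_one, ← Complex.ofReal_sub, one_sub_div hab.ne',
        add_sub_cancel_right]
    rw [hsub, Complex.normSq_mul, Complex.normSq_mul, Complex.normSq_ofReal, Complex.normSq_ofReal]
    field_simp
    ring

section EigenCoords

variable [DecidableEq m] [DecidableEq n] {A : Matrix m m ℂ} {B : Matrix n n ℂ}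

theorem splittingEnergy_eq_sum (hA : A.IsHermitian) (hB : B.IsHermitian) (K : Matrix m n ℂ)
    (t : ℝ) (M : Matrix m n ℂ) : splittingEnergy A B K t M =
      ∑ i, ∑ j, (Complex.normSq (eigenCoords hA hB M i j) * hA.eigenvalues i +
        Complex.normSq (eigenCoords hA hB K i j - eigenCoords hA hB M i j) *
          (t * hB.eigenvalues j)) := by
  have hleft := trace_cfc_mul_mul_cfc_mul hA hB M id fun _ => 1
  have hright := trace_cfc_mul_mul_cfc_mul hA hB (K - M) (fun _ => 1) id
  rw [cfc_id ℝ A, cfc_const_one ℝ B, Matrix.mul_one] at hleft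
  rw [cfc_id ℝ B, cfc_const_one ℝ A, Matrix.one_mul] at hright
  rw [splittingEnergy, hleft, hright, ← overlapSum_const_mul]
  simp only [overlapSum, ← Finset.sum_add_distrib, map_sub, Matrix.sub_apply, id, mul_one, one_mul]

theorem isLeast_splittingEnergy (hA : A.PosSemidef) (hB : B.PosSemidef) (K : Matrix m n ℂ) {t : ℝ}
    (ht : 0 ≤ t) : IsLeast (Set.range (splittingEnergy A B K t))
      (overlapSum hA.1 hB.1 K fun a b => a * (t * b) / (a + t * b)) := by
  have ha := hA.eigenvalues_nonneg
  have hb (j : n) := mul_nonneg ht (hB.eigenvalues_nonneg j)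
  constructor
  · let W : Matrix m n ℂ := .of fun i j => eigenCoords hA.1 hB.1 K i j *
      (t * hB.1.eigenvalues j / (hA.1.eigenvalues i + t * hB.1.eigenvalues j) : ℝ)
    refine ⟨(eigenCoords hA.1 hB.1).symm W, ?_⟩
    rw [splittingEnergy_eq_sum hA.1 hB.1, AddEquiv.apply_symm_apply]
    exact Finset.sum_congr rfl fun i _ => Finset.sum_congr rfl fun j _ =>
      (normSq_mul_parallel_eq (ha i) (hb j) _).symm
  · rintro _ ⟨M, rfl⟩
    rw [splittingEnergy_eq_sum hA.1 hB.1]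
    exact Finset.sum_le_sum fun i _ => Finset.sum_le_sum fun j _ =>
      normSq_mul_parallel_le (ha i) (hb j) _ _

theorem parallelTrace_eq_overlapSum (hA : A.PosSemidef) (hB : B.PosSemidef) (K : Matrix m n ℂ)
    {t : ℝ} (ht : 0 ≤ t) : parallelTrace A B K t =
      overlapSum hA.1 hB.1 K fun a b => a * (t * b) / (a + t * b) :=
  (isLeast_splittingEnergy hA hB K ht).isGLB.csInf_eq (Set.range_nonempty _)

theorem integrable_overlapSum_and_integral_eq {T : Type*} [MeasurableSpace T] {μ : Measure T}
    {φ : T → ℝ → ℝ → ℝ} (hA : A.PosSemidef) (hB : B.PosSemidef) (K : Matrix m n ℂ)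
    (hφ : ∀ a b, 0 ≤ a → 0 ≤ b → Integrable (φ · a b) μ) :
    Integrable (fun t => overlapSum hA.1 hB.1 K (φ t)) μ ∧
    overlapSum hA.1 hB.1 K (fun a b => ∫ t, φ t a b ∂μ) =
      ∫ t, overlapSum hA.1 hB.1 K (φ t) ∂μ := by
  have hterm (i : m) (j : n) := (hφ _ _ (hA.eigenvalues_nonneg i)
    (hB.eigenvalues_nonneg j)).const_mul (Complex.normSq (eigenCoords hA.1 hB.1 K i j))
  have hrow (i : m) := integrable_finsetSum Finset.univ fun j _ => hterm i j
  refine ⟨integrable_finsetSum _ fun i _ => hrow i, ?_⟩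
  simp only [overlapSum]
  rw [integral_finsetSum _ fun i _ => hrow i]
  refine Finset.sum_congr rfl fun i _ => ?_
  rw [integral_finsetSum _ fun j _ => hterm i j]
  simp only [integral_const_mul]

end EigenCoords

theorem concaveOn_parallelTrace (K : Matrix m n ℂ) {t : ℝ} (ht : 0 ≤ t) :
    ConcaveOn ℝ (Set.Ici 0 ×ˢ Set.Ici 0)
      fun x : Matrix m m ℂ × Matrix n n ℂ => parallelTrace x.1 x.2 K t := by
  classical
  refine concaveOn_of_isGLB ((convex_Ici 0).prod (convex_Ici 0))
    (concaveOn_splittingEnergy K · t) fun x hx => ?_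
  rw [parallelTrace_eq_overlapSum hx.1.posSemidef hx.2.posSemidef K ht]
  exact (isLeast_splittingEnergy hx.1.posSemidef hx.2.posSemidef K ht).isGLB

theorem exists_measure_rpow_mul_rpow_eq_integral {p : ℝ} (hp : p ∈ Set.Ioo 0 1) :
    ∃ μ : Measure ℝ, ∀ a b : ℝ, 0 ≤ a → 0 ≤ b →
      IntegrableOn (fun t => t ^ (p - 2) * (a * (t * b) / (a + t * b))) (Set.Ioi 0) μ ∧
      a ^ p * b ^ (1 - p) = ∫ t in Set.Ioi 0, t ^ (p - 2) * (a * (t * b) / (a + t * b)) ∂μ := by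
  obtain ⟨μ, hμ⟩ := Real.exists_measure_rpow_eq_integral_rpowIntegrand₀₁ hp
  refine ⟨μ, fun a b ha hb => ?_⟩
  rcases hb.eq_or_lt with rfl | hb'
  · simp [Real.zero_rpow (sub_pos.2 hp.2).ne']
  obtain ⟨hint, hpow⟩ := hμ (a / b) (div_nonneg ha hb)
  have hscale : Set.EqOn (fun t => b * Real.rpowIntegrand₀₁ p t (a / b))
      (fun t => t ^ (p - 2) * (a * (t * b) / (a + t * b))) (Set.Ioi 0) := fun t (ht : 0 < t) => by
    have hpow_pred : t ^ (p - 1) = t ^ (p - 2) * t := by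
      rw [← Real.rpow_add_one ht.ne']
      ring_nf
    have hden : a + t * b ≠ 0 := by positivity
    simp only [Real.rpowIntegrand₀₁_eq_pow_div hp ht.le (div_nonneg ha hb), hpow_pred]
    field_simp [hden]
    rw [add_comm]
  rw [← integrableOn_congr_fun hscale measurableSet_Ioi,
    ← setIntegral_congr_fun measurableSet_Ioi hscale, integral_const_mul, ← hpow,
    Real.div_rpow ha hb, Real.rpow_sub hb', Real.rpow_one]
  exact ⟨hint.const_mul b, by ring⟩

variable [DecidableEq m] [DecidableEq n]

theorem exists_measure_trace_rpow_mul_rpow_eq_integral {p : ℝ} (hp : p ∈ Set.Ioo 0 1) :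
    ∃ μ : Measure ℝ, ∀ (A : Matrix m m ℂ) (B : Matrix n n ℂ) (K : Matrix m n ℂ), 0 ≤ A → 0 ≤ B →
      IntegrableOn (fun t => t ^ (p - 2) * parallelTrace A B K t) (Set.Ioi 0) μ ∧
      (A ^ p * K * B ^ (1 - p) * Kᴴ).trace.re =
        ∫ t in Set.Ioi 0, t ^ (p - 2) * parallelTrace A B K t ∂μ := by
  obtain ⟨μ, hμ⟩ := exists_measure_rpow_mul_rpow_eq_integral hp
  refine ⟨μ, fun A B K hA hB => ?_⟩
  have hA' := hA.posSemidef
  have hB' := hB.posSemidef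
  have hparallel : Set.EqOn
      (fun t => overlapSum hA'.1 hB'.1 K fun a b => t ^ (p - 2) * (a * (t * b) / (a + t * b)))
      (fun t => t ^ (p - 2) * parallelTrace A B K t) (Set.Ioi 0) := fun t (ht : 0 < t) => by
    simp only [parallelTrace_eq_overlapSum hA' hB' K ht.le, overlapSum_const_mul]
  obtain ⟨hint, hintegral⟩ := integrable_overlapSum_and_integral_eq hA' hB' K
    fun a b ha hb => (hμ a b ha hb).1
  refine ⟨(integrableOn_congr_fun hparallel measurableSet_Ioi).1 hint, ?_⟩
  calc (A ^ p * K * B ^ (1 - p) * Kᴴ).trace.re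
      = overlapSum hA'.1 hB'.1 K fun a b => a ^ p * b ^ (1 - p) := by
        rw [CFC.rpow_eq_cfc_real hA, CFC.rpow_eq_cfc_real hB, trace_cfc_mul_mul_cfc_mul hA'.1 hB'.1]
    _ = overlapSum hA'.1 hB'.1 K fun a b =>
          ∫ t in Set.Ioi 0, t ^ (p - 2) * (a * (t * b) / (a + t * b)) ∂μ :=
        overlapSum_congr hA' hB' K fun a b ha hb => (hμ a b ha hb).2
    _ = ∫ t in Set.Ioi 0, t ^ (p - 2) * parallelTrace A B K t ∂μ := by
        rw [hintegral, setIntegral_congr_fun measurableSet_Ioi hparallel]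

theorem concaveOn_trace_rpow_mul_rpow (K : Matrix m n ℂ) {p : ℝ} (hp : p ∈ Set.Ioc 0 1) :
    ConcaveOn ℝ (Set.Ici 0 ×ˢ Set.Ici 0)
      fun x : Matrix m m ℂ × Matrix n n ℂ => (x.1 ^ p * K * x.2 ^ (1 - p) * Kᴴ).trace.re := by
  rcases hp.2.eq_or_lt with rfl | hp1
  · exact (concaveOn_splittingEnergy K K 0).congr fun x hx => by
      simp [splittingEnergy, CFC.rpow_one x.1 hx.1, CFC.rpow_zero x.2 hx.2]
  obtain ⟨μ, hμ⟩ :=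
    exists_measure_trace_rpow_mul_rpow_eq_integral (m := m) (n := n) ⟨hp.1, hp1⟩
  refine (concaveOn_setIntegral ((convex_Ici 0).prod (convex_Ici 0)) measurableSet_Ioi
    (fun t (ht : 0 < t) => ?_) fun x hx => (hμ x.1 x.2 K hx.1 hx.2).1).congr
    fun x hx => (hμ x.1 x.2 K hx.1 hx.2).2.symm
  exact (concaveOn_parallelTrace K ht.le).smul (Real.rpow_nonneg ht.le (p - 2))

end Lieb

section Epstein

open scoped MatrixOrder

variable {m n : Type*} [Fintype m] [DecidableEq m] [Fintype n] [DecidableEq n]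

theorem rpow_add_of_nonneg {A : Matrix n n ℂ} (hA : 0 ≤ A) {s t : ℝ} (hs : 0 ≤ s) (ht : 0 ≤ t) :
    A ^ (s + t) = A ^ s * A ^ t := by
  have hcont (f : ℝ → ℝ) : ContinuousOn f (spectrum ℝ A) := A.finite_real_spectrum.continuousOn f
  rw [CFC.rpow_eq_cfc_real hA, CFC.rpow_eq_cfc_real hA, CFC.rpow_eq_cfc_real hA,
    ← cfc_mul _ _ A (hcont _) (hcont _)]
  exact cfc_congr fun x hx => Real.rpow_add_of_nonneg (spectrum_nonneg_of_nonneg hA hx) hs ht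

theorem mul_rpow_inv_rpow_one_sub {A : Matrix n n ℂ} (hA : 0 ≤ A) {p : ℝ} (hp : p ∈ Set.Ioc 0 1) :
    A * (A ^ p⁻¹) ^ (1 - p) = A ^ p⁻¹ := by
  have hexp : p⁻¹ * (1 - p) = p⁻¹ - 1 := by rw [mul_one_sub, inv_mul_cancel₀ hp.1.ne']
  calc A * (A ^ p⁻¹) ^ (1 - p) = A ^ (1 : ℝ) * A ^ (p⁻¹ - 1) := by
        rw [CFC.rpow_rpow_of_exponent_nonneg A _ _ (inv_nonneg.2 hp.1.le) (sub_nonneg.2 hp.2) hA,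
          hexp, CFC.rpow_one A hA]
    _ = A ^ p⁻¹ := by
        rw [← rpow_add_of_nonneg hA zero_le_one (sub_nonneg.2 ((one_le_inv₀ hp.1).2 hp.2)),
          add_sub_cancel]

/-- The functional `A ↦ Tr (Kᴴ Aᵖ K)^(1/p)` of Epstein's concavity theorem. -/
noncomputable def epsteinTrace (p : ℝ) (K : Matrix m n ℂ) (A : Matrix m m ℂ) : ℝ :=
  ((Kᴴ * A ^ p * K) ^ p⁻¹).trace.re

theorem concaveOn_epsteinTrace (K : Matrix m n ℂ) {p : ℝ} (hp : p ∈ Set.Ioc 0 1) :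
    ConcaveOn ℝ (Set.Ici 0) (epsteinTrace p K) := by
  have hcompress (A : Matrix m m ℂ) : 0 ≤ Kᴴ * A ^ p * K :=
    (CFC.rpow_nonneg.posSemidef.conjTranspose_mul_mul_same K).nonneg
  refine ⟨convex_Ici 0, fun A₁ hA₁ A₂ hA₂ a b ha hb hab => ?_⟩
  set Y : Matrix m m ℂ → Matrix n n ℂ := fun A => (Kᴴ * A ^ p * K) ^ p⁻¹
  have hY (A : Matrix m m ℂ) : 0 ≤ Y A := CFC.rpow_nonneg
  have hcycle (A : Matrix m m ℂ) (Z : Matrix n n ℂ) :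
      (A ^ p * K * Z ^ (1 - p) * Kᴴ).trace.re = (Kᴴ * A ^ p * K * Z ^ (1 - p)).trace.re := by
    rw [Matrix.trace_mul_comm]
    simp only [Matrix.mul_assoc]
  have hdiag (A : Matrix m m ℂ) :
      (A ^ p * K * Y A ^ (1 - p) * Kᴴ).trace.re = epsteinTrace p K A := by
    rw [hcycle, mul_rpow_inv_rpow_one_sub (hcompress A) hp, epsteinTrace]
  have htrace : (a • Y A₁ + b • Y A₂).trace.re =
      a • epsteinTrace p K A₁ + b • epsteinTrace p K A₂ := by
    simp only [Matrix.trace_add, Matrix.trace_smul, Complex.add_re, Complex.smul_re, Y,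
      epsteinTrace]
  have hlieb := (concaveOn_trace_rpow_mul_rpow K hp).2
    (x := (A₁, Y A₁)) (y := (A₂, Y A₂)) ⟨hA₁, hY A₁⟩ ⟨hA₂, hY A₂⟩ ha hb hab
  have hyoung := trace_mul_rpow_le (hcompress (a • A₁ + b • A₂))
    (Y := a • Y A₁ + b • Y A₂) (add_nonneg (smul_nonneg ha (hY A₁)) (smul_nonneg hb (hY A₂))) hp
  simp only [hdiag, Prod.smul_mk, Prod.mk_add_mk, hcycle (a • A₁ + b • A₂)] at hlieb
  rw [htrace, ← epsteinTrace] at hyoung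
  exact le_of_mul_le_mul_left (by linear_combination hlieb + hyoung) hp.1

end Epstein

section HoelderYoung

open scoped MatrixOrder

variable {n : Type*} [Fintype n]

theorem re_trace_mul_conjTranspose_le {m : Type*} [Fintype m] (X Y : Matrix m n ℂ) :
    (X * Yᴴ).trace.re ≤ ((X * Xᴴ).trace.re + (Y * Yᴴ).trace.re) / 2 := by
  have hsq : 0 ≤ ((X - Y) * (X - Y)ᴴ).trace.re :=
    (Complex.le_def.1 (Matrix.posSemidef_self_mul_conjTranspose (X - Y)).trace_nonneg).1
  have hswap : (Y * Xᴴ).trace.re = (X * Yᴴ).trace.re := by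
    rw [← Matrix.conjTranspose_conjTranspose Y, ← Matrix.conjTranspose_mul,
      Matrix.trace_conjTranspose, Matrix.conjTranspose_conjTranspose]
    exact Complex.conj_re _
  simp only [Matrix.conjTranspose_sub, Matrix.sub_mul, Matrix.mul_sub, Matrix.trace_sub,
    Complex.sub_re, hswap] at hsq
  linarith

variable [DecidableEq n]

theorem conjTranspose_rpow (A : Matrix n n ℂ) (t : ℝ) : (A ^ t)ᴴ = A ^ t :=
  CFC.rpow_nonneg.posSemidef.isHermitian

theorem epsteinTrace_eq_trace_conjTranspose_mul_self {m : Type*} [Fintype m] [DecidableEq m]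
    {A : Matrix m m ℂ} (hA : 0 ≤ A) (K : Matrix m n ℂ) {p : ℝ} (hp : 0 ≤ p) :
    epsteinTrace p K A = (((A ^ (p / 2) * K)ᴴ * (A ^ (p / 2) * K)) ^ p⁻¹).trace.re := by
  have hhalf : A ^ p = A ^ (p / 2) * A ^ (p / 2) := by
    rw [← rpow_add_of_nonneg hA (by positivity) (by positivity), add_halves]
  rw [epsteinTrace, hhalf, Matrix.conjTranspose_mul, conjTranspose_rpow]
  simp only [Matrix.mul_assoc]

theorem isStrictlyPositive_mul_conjTranspose_self {X : Matrix n n ℂ} (hX : IsUnit X) :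
    IsStrictlyPositive (X * Xᴴ) :=
  (hX.mul hX.star).isStrictlyPositive (Matrix.posSemidef_self_mul_conjTranspose X).nonneg

theorem exists_mem_unitaryGroup_eq_rpow_mul {X : Matrix n n ℂ} (hX : IsUnit X) :
    ∃ V ∈ unitaryGroup n ℂ, X = (X * Xᴴ) ^ (1 / 2 : ℝ) * V := by
  have hN := isStrictlyPositive_mul_conjTranspose_self hX
  set N := X * Xᴴ with hN_def
  refine ⟨N ^ (-(1 / 2) : ℝ) * X, Matrix.mem_unitaryGroup_iff.2 ?_, ?_⟩
  · calc N ^ (-(1 / 2) : ℝ) * X * star (N ^ (-(1 / 2) : ℝ) * X)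
        = N ^ (-(1 / 2) : ℝ) * N ^ (1 : ℝ) * N ^ (-(1 / 2) : ℝ) := by
          rw [Matrix.star_eq_conjTranspose, Matrix.conjTranspose_mul, conjTranspose_rpow,
            CFC.rpow_one N hN.nonneg, hN_def]
          simp only [Matrix.mul_assoc]
      _ = 1 := by
          rw [← CFC.rpow_add hN.isUnit, ← CFC.rpow_add hN.isUnit]
          norm_num [CFC.rpow_zero N hN.nonneg]
  · rw [← Matrix.mul_assoc, CFC.rpow_mul_rpow_neg _ hN, Matrix.one_mul]

theorem trace_rpow_mul_mul_conjTranspose_le {N : Matrix n n ℂ} (hN : 0 ≤ N) (R : Matrix n n ℂ)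
    {α z : ℝ} (hα : 0 < α) (hz : α ≤ z) :
    (N ^ ((z - α) / 2) * R * (N ^ ((z - α) / 2) * R)ᴴ).trace.re ≤
      α / z * ((Rᴴ * R) ^ (z / α)).trace.re + (1 - α / z) * (N ^ z).trace.re := by
  have hz0 : 0 < z := hα.trans_le hz
  have hc : 0 ≤ (z - α) / 2 := by linarith
  have hp : α / z ∈ Set.Ioc 0 1 := ⟨div_pos hα hz0, (div_le_one hz0).2 hz⟩
  have hpow : N ^ ((z - α) / 2) * N ^ ((z - α) / 2) = (N ^ z) ^ (1 - α / z) := by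
    rw [← rpow_add_of_nonneg hN hc hc, CFC.rpow_rpow_of_exponent_nonneg N _ _ hz0.le
      (sub_nonneg.2 hp.2) hN]
    congr 1
    field_simp
    ring
  calc (N ^ ((z - α) / 2) * R * (N ^ ((z - α) / 2) * R)ᴴ).trace.re
      = (R * Rᴴ * (N ^ z) ^ (1 - α / z)).trace.re := by
        rw [Matrix.conjTranspose_mul, conjTranspose_rpow, ← hpow, Matrix.mul_assoc,
          Matrix.trace_mul_comm]
        simp only [Matrix.mul_assoc]
    _ ≤ α / z * ((R * Rᴴ) ^ (α / z)⁻¹).trace.re + (1 - α / z) * (N ^ z).trace.re :=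
        trace_mul_rpow_le (Matrix.posSemidef_self_mul_conjTranspose R).nonneg CFC.rpow_nonneg hp
    _ = _ := by rw [inv_div, trace_rpow_mul_conjTranspose_self]

theorem trace_rpow_mul_le {P Q : Matrix n n ℂ} (hP : IsUnit P) (hQ : IsUnit Q) {α β z : ℝ}
    (hα : 0 < α) (hβ : 0 < β) (hαβ : α + β = 1) (hαz : α ≤ z) (hβz : β ≤ z) :
    ((P * Q * (P * Q)ᴴ) ^ z).trace.re ≤
      α * ((Pᴴ * P) ^ (z / α)).trace.re + β * ((Q * Qᴴ) ^ (z / β)).trace.re := by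
  have hN := isStrictlyPositive_mul_conjTranspose_self (hP.mul hQ)
  obtain ⟨V, hV, hpolar⟩ := exists_mem_unitaryGroup_eq_rpow_mul (hP.mul hQ)
  set N := P * Q * (P * Q)ᴴ
  have hz : 0 < z := hα.trans_le hαz
  have hsqrt : N ^ (1 / 2 : ℝ) = P * Q * Vᴴ := by
    rw [hpolar, Matrix.mul_assoc, ← Matrix.star_eq_conjTranspose,
      Unitary.mul_star_self_of_mem hV, Matrix.mul_one]
  have hfactor : N ^ z = N ^ ((z - α) / 2) * P * (N ^ ((z - β) / 2) * (V * Qᴴ))ᴴ :=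
    calc N ^ z = N ^ ((z - α) / 2) * N ^ (1 / 2 : ℝ) * N ^ ((z - β) / 2) := by
          rw [← CFC.rpow_add hN.isUnit, ← CFC.rpow_add hN.isUnit]
          congr 1
          linarith
      _ = N ^ ((z - α) / 2) * P * (N ^ ((z - β) / 2) * (V * Qᴴ))ᴴ := by
          simp only [hsqrt, Matrix.conjTranspose_mul, conjTranspose_rpow,
            Matrix.conjTranspose_conjTranspose, Matrix.mul_assoc]
  have hQV : (V * Qᴴ)ᴴ * (V * Qᴴ) = Q * Qᴴ := by
    rw [Matrix.conjTranspose_mul, Matrix.conjTranspose_conjTranspose, Matrix.mul_assoc,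
      ← Matrix.mul_assoc Vᴴ, ← Matrix.star_eq_conjTranspose V, Unitary.star_mul_self_of_mem hV,
      Matrix.one_mul]
  have hamgm := re_trace_mul_conjTranspose_le (N ^ ((z - α) / 2) * P)
    (N ^ ((z - β) / 2) * (V * Qᴴ))
  have hyoungP := trace_rpow_mul_mul_conjTranspose_le hN.nonneg P hα hαz
  have hyoungQ := trace_rpow_mul_mul_conjTranspose_le hN.nonneg (V * Qᴴ) hβ hβz
  rw [← hfactor] at hamgm
  rw [hQV] at hyoungQ
  have hscaled : (N ^ z).trace.re / z ≤
      (α * ((Pᴴ * P) ^ (z / α)).trace.re + β * ((Q * Qᴴ) ^ (z / β)).trace.re) / z := by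
    linear_combination 2 * hamgm + hyoungP + hyoungQ - (N ^ z).trace.re / z * hαβ
  exact (div_le_div_iff_of_pos_right hz).1 hscaled

theorem exists_mul_eq_and_trace_rpow_eq {Z : Matrix n n ℂ} (hZ : IsUnit Z) {α β : ℝ}
    (hα : α ≠ 0) (hβ : β ≠ 0) (hαβ : α + β = 1) (z : ℝ) :
    ∃ P Q : Matrix n n ℂ, IsUnit P ∧ P * Q = Z ∧
      α * ((Pᴴ * P) ^ (z / α)).trace.re + β * ((Q * Qᴴ) ^ (z / β)).trace.re =
        ((Z * Zᴴ) ^ z).trace.re := by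
  have hN := isStrictlyPositive_mul_conjTranspose_self hZ
  set N := Z * Zᴴ with hN_def
  refine ⟨N ^ (α / 2), N ^ (-(α / 2)) * Z, hN.isUnit.cfcRpow _, ?_, ?_⟩
  · rw [← Matrix.mul_assoc, CFC.rpow_mul_rpow_neg _ hN, Matrix.one_mul]
  have hP : (N ^ (α / 2))ᴴ * N ^ (α / 2) = N ^ α := by
    rw [conjTranspose_rpow, ← CFC.rpow_add hN.isUnit, add_halves]
  have hQ : N ^ (-(α / 2)) * Z * (N ^ (-(α / 2)) * Z)ᴴ = N ^ β :=
    calc N ^ (-(α / 2)) * Z * (N ^ (-(α / 2)) * Z)ᴴ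
        = N ^ (-(α / 2)) * N ^ (1 : ℝ) * N ^ (-(α / 2)) := by
          rw [Matrix.conjTranspose_mul, conjTranspose_rpow, CFC.rpow_one N hN.nonneg, hN_def]
          simp only [Matrix.mul_assoc]
      _ = N ^ β := by
          rw [← CFC.rpow_add hN.isUnit, ← CFC.rpow_add hN.isUnit]
          congr 1
          linarith
  rw [hP, hQ, CFC.rpow_rpow N _ _ hα hN, CFC.rpow_rpow N _ _ hβ hN, mul_div_cancel₀ _ hα,
    mul_div_cancel₀ _ hβ, ← add_mul, hαβ, one_mul]

theorem isLeast_range_units_trace_rpow {S R : Matrix n n ℂ} (hS : IsUnit S) (hR : IsUnit R)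
    {α β z : ℝ} (hα : 0 < α) (hβ : 0 < β) (hαβ : α + β = 1) (hαz : α ≤ z) (hβz : β ≤ z) :
    IsLeast (Set.range fun K : (Matrix n n ℂ)ˣ =>
      α * (((S * K.val)ᴴ * (S * K.val)) ^ (z / α)).trace.re +
        β * (((K⁻¹).val * R * ((K⁻¹).val * R)ᴴ) ^ (z / β)).trace.re)
      ((S * R * (S * R)ᴴ) ^ z).trace.re := by
  constructor
  · obtain ⟨P, Q, hP, hPQ, htrace⟩ :=
      exists_mul_eq_and_trace_rpow_eq (hS.mul hR) hα.ne' hβ.ne' hαβ z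
    obtain ⟨P, rfl⟩ := hP
    obtain ⟨S, rfl⟩ := hS
    have hQ : ((S⁻¹ * P)⁻¹).val * R = Q := by
      rw [_root_.mul_inv_rev, inv_inv, Units.val_mul, mul_assoc, ← hPQ, Units.inv_mul_cancel_left]
    refine ⟨S⁻¹ * P, ?_⟩
    beta_reduce
    rw [hQ, Units.val_mul, Units.mul_inv_cancel_left, htrace]
  · rintro _ ⟨K, rfl⟩
    have hSR : S * K.val * ((K⁻¹).val * R) = S * R := by
      rw [mul_assoc, Units.mul_inv_cancel_left]
    simpa only [hSR] using
      trace_rpow_mul_le (hS.mul K.isUnit) ((K⁻¹).isUnit.mul hR) hα hβ hαβ hαz hβz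

end HoelderYoung

section Renyi

open scoped MatrixOrder

variable {n : Type*} [Fintype n] [DecidableEq n] {α z : ℝ} {ρ σ : Matrix n n ℂ}

theorem convex_setOf_isStrictlyPositive :
    Convex ℝ {A : Matrix n n ℂ | IsStrictlyPositive A} := by
  intro A hA B hB a b ha hb hab
  rcases ha.eq_or_lt with rfl | ha
  · rw [zero_add] at hab
    simpa [hab] using hB
  · exact ((hA.posDef.smul ha).add_posSemidef
      (smul_nonneg hb hB.nonneg).posSemidef).isStrictlyPositive

theorem Ici_zero_subset_closure_setOf_isStrictlyPositive :
    Set.Ici (0 : Matrix n n ℂ) ⊆ closure {A | IsStrictlyPositive A} := by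
  intro A hA
  have hcont : Continuous fun ε : ℝ => A + ε • (1 : Matrix n n ℂ) := by fun_prop
  have hlim :=
    (hcont.tendsto' 0 A (by rw [zero_smul, add_zero])).mono_left
    (nhdsWithin_le_nhds (s := Set.Ioi 0))
  have hpos : ∀ᶠ ε in nhdsWithin (0 : ℝ) (Set.Ioi 0),
      IsStrictlyPositive (A + ε • (1 : Matrix n n ℂ)) := by
    filter_upwards [self_mem_nhdsWithin] with ε hε
    exact (PosDef.posSemidef_add hA.posSemidef (PosDef.one.smul hε)).isStrictlyPositive
  exact mem_closure_of_tendsto hlim hpos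

theorem rpow_mul_mul_rpow_nonneg (A : Matrix n n ℂ) {B : Matrix n n ℂ} (hB : 0 ≤ B) (t : ℝ) :
    0 ≤ A ^ t * B * A ^ t := by
  have h := (hB.posSemidef.mul_mul_conjTranspose_same (A ^ t)).nonneg
  rwa [conjTranspose_rpow] at h

theorem Qaz_eq_trace_rpow (hρ : 0 ≤ ρ) (hσ : 0 ≤ σ) (α z : ℝ) :
    Qaz α z ρ σ =
      ((σ ^ ((1 - α) / (2 * z)) * ρ ^ (α / z) * σ ^ ((1 - α) / (2 * z))) ^ z).trace.re := by
  rw [Qaz, mpow_eq_rpow hρ, mpow_eq_rpow hσ,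
    mpow_eq_rpow (rpow_mul_mul_rpow_nonneg σ CFC.rpow_nonneg _)]

theorem Qaz_eq_trace_mul_conjTranspose_self (hρ : 0 ≤ ρ) (hσ : 0 ≤ σ) (hα : 0 ≤ α) (hz : 0 ≤ z) :
    Qaz α z ρ σ = ((σ ^ ((1 - α) / z / 2) * ρ ^ (α / z / 2) *
      (σ ^ ((1 - α) / z / 2) * ρ ^ (α / z / 2))ᴴ) ^ z).trace.re := by
  have hhalf : 0 ≤ α / z / 2 := by positivity
  rw [Qaz_eq_trace_rpow hρ hσ, ← add_halves (α / z), rpow_add_of_nonneg hρ hhalf hhalf,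
    Matrix.conjTranspose_mul, conjTranspose_rpow, conjTranspose_rpow, mul_comm 2 z, ← div_div,
    add_halves]
  simp only [Matrix.mul_assoc]

theorem isLeast_Qaz (hα0 : 0 < α) (hα1 : α < 1) (hz : max α (1 - α) ≤ z)
    (hρ : IsStrictlyPositive ρ) (hσ : IsStrictlyPositive σ) :
    IsLeast (Set.range fun K : (Matrix n n ℂ)ˣ => (1 - α) * epsteinTrace ((1 - α) / z) K.val σ +
      α * epsteinTrace (α / z) (K⁻¹).valᴴ ρ) (Qaz α z ρ σ) := by
  obtain ⟨hαz, hβz⟩ := max_le_iff.1 hz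
  have hβ0 : 0 < 1 - α := sub_pos.2 hα1
  have hz0 : 0 < z := hα0.trans_le hαz
  have hσ_half : IsUnit (σ ^ ((1 - α) / z / 2)) := hσ.isUnit.cfcRpow _ hσ.nonneg
  have hρ_half : IsUnit (ρ ^ (α / z / 2)) := hρ.isUnit.cfcRpow _ hρ.nonneg
  rw [Qaz_eq_trace_mul_conjTranspose_self hρ.nonneg hσ.nonneg hα0.le hz0.le]
  simpa only [epsteinTrace_eq_trace_conjTranspose_mul_self hσ.nonneg _ (div_pos hβ0 hz0).le,
    epsteinTrace_eq_trace_conjTranspose_mul_self hρ.nonneg _ (div_pos hα0 hz0).le, inv_div,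
    Matrix.conjTranspose_mul, Matrix.conjTranspose_conjTranspose, conjTranspose_rpow] using
    isLeast_range_units_trace_rpow hσ_half hρ_half hβ0 hα0 (sub_add_cancel 1 α) hβz hαz

theorem concaveOn_Qaz_isStrictlyPositive (hα0 : 0 < α) (hα1 : α < 1)
    (hz : max α (1 - α) ≤ z) :
    ConcaveOn ℝ ({A : Matrix n n ℂ | IsStrictlyPositive A} ×ˢ {A | IsStrictlyPositive A})
      fun x => Qaz α z x.1 x.2 := by
  have hz0 : 0 < z := hα0.trans_le ((le_max_left _ _).trans hz)
  have hp : α / z ∈ Set.Ioc 0 1 :=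
    ⟨div_pos hα0 hz0, (div_le_one hz0).2 ((le_max_left _ _).trans hz)⟩
  have hq : (1 - α) / z ∈ Set.Ioc 0 1 :=
    ⟨div_pos (sub_pos.2 hα1) hz0, (div_le_one hz0).2 ((le_max_right _ _).trans hz)⟩
  have hsub : {A : Matrix n n ℂ | IsStrictlyPositive A} ⊆ Set.Ici 0 := fun A hA => hA.nonneg
  have hconvex := (convex_setOf_isStrictlyPositive (n := n)).prod
    (convex_setOf_isStrictlyPositive (n := n))
  refine concaveOn_of_isGLB hconvex (fun K => ?_)
    fun x hx => (isLeast_Qaz hα0 hα1 hz hx.1 hx.2).isGLB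
  have hσ := ((concaveOn_epsteinTrace K.val hq).comp_linearMap
    (LinearMap.snd ℝ (Matrix n n ℂ) (Matrix n n ℂ))).smul (sub_nonneg.2 hα1.le)
  have hρ := ((concaveOn_epsteinTrace (K⁻¹ : (Matrix n n ℂ)ˣ).valᴴ hp).comp_linearMap
    (LinearMap.fst ℝ (Matrix n n ℂ) (Matrix n n ℂ))).smul hα0.le
  exact (hσ.subset (fun x hx => hsub hx.2) hconvex).add (hρ.subset (fun x hx => hsub hx.1) hconvex)

open scoped Matrix.Norms.L2Operator in
theorem continuousOn_rpow {r : ℝ} (hr : 0 < r) :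
    ContinuousOn (fun A : Matrix n n ℂ => A ^ r) (Set.Ici 0) := by
  lift r to NNReal using hr.le
  exact (CFC.continuousOn_nnrpow (A := Matrix n n ℂ) r).congr
    fun A _ => (CFC.nnrpow_eq_rpow (NNReal.coe_pos.1 hr)).symm

theorem continuousOn_Qaz (hα0 : 0 < α) (hα1 : α < 1) (hz : 0 < z) :
    ContinuousOn (fun x : Matrix n n ℂ × Matrix n n ℂ => Qaz α z x.1 x.2)
      (Set.Ici 0 ×ˢ Set.Ici 0) := by
  have hρ := (continuousOn_rpow (n := n) (div_pos hα0 hz)).comp continuousOn_fst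
    fun x (hx : x ∈ Set.Ici 0 ×ˢ Set.Ici (0 : Matrix n n ℂ)) => hx.1
  have hσ := (continuousOn_rpow (n := n) (div_pos (sub_pos.2 hα1) (mul_pos two_pos hz))).comp
    continuousOn_snd fun x (hx : x ∈ Set.Ici (0 : Matrix n n ℂ) ×ˢ Set.Ici 0) => hx.2
  have hprod := (continuousOn_rpow hz).comp ((hσ.mul hρ).mul hσ) fun x _ =>
    rpow_mul_mul_rpow_nonneg x.2 CFC.rpow_nonneg _
  have htrace : Continuous fun X : Matrix n n ℂ => X.trace.re := by fun_prop
  exact (htrace.comp_continuousOn hprod).congr fun x hx => Qaz_eq_trace_rpow hx.1 hx.2 α z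

theorem Qaz_jointly_concave_general (hα0 : 0 < α) (hα1 : α < 1) (hz : max α (1 - α) ≤ z) :
    ConcaveOn ℝ {x : Matrix n n ℂ × Matrix n n ℂ | x.1.PosSemidef ∧ x.2.PosSemidef}
      fun x => Qaz α z x.1 x.2 := by
  have hnonneg : {x : Matrix n n ℂ × Matrix n n ℂ | x.1.PosSemidef ∧ x.2.PosSemidef} =
      Set.Ici 0 ×ˢ Set.Ici 0 := by
    ext x
    exact and_congr Matrix.nonneg_iff_posSemidef.symm Matrix.nonneg_iff_posSemidef.symm
  rw [hnonneg]
  refine concaveOn_of_subset_closure (concaveOn_Qaz_isStrictlyPositive hα0 hα1 hz)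
    ((convex_Ici 0).prod (convex_Ici 0))
    (Set.prod_mono (fun A hA => hA.nonneg) fun A hA => hA.nonneg) ?_
    (continuousOn_Qaz hα0 hα1 (hα0.trans_le ((le_max_left _ _).trans hz)))
  rw [closure_prod_eq]
  exact Set.prod_mono Ici_zero_subset_closure_setOf_isStrictlyPositive
    Ici_zero_subset_closure_setOf_isStrictlyPositive

end Renyi

/-- Joint concavity of `Q_{α,z}` for `0 < α < 1` and `z ≥ max{α, 1−α}`. -/
theorem Qaz_jointly_concave (n : ℕ) (α z : ℝ) (hα0 : 0 < α) (hα1 : α < 1)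
    (hz : max α (1 - α) ≤ z) (lam : ℝ) (hlam0 : 0 ≤ lam) (hlam1 : lam ≤ 1)
    (ρ₁ ρ₂ σ₁ σ₂ : Matrix (Fin n) (Fin n) ℂ)
    (hρ₁ : ρ₁.PosSemidef) (hρ₂ : ρ₂.PosSemidef)
    (hσ₁ : σ₁.PosSemidef) (hσ₂ : σ₂.PosSemidef) :
    lam * Qaz α z ρ₁ σ₁ + (1 - lam) * Qaz α z ρ₂ σ₂
      ≤ Qaz α z (lam • ρ₁ + (1 - lam) • ρ₂) (lam • σ₁ + (1 - lam) • σ₂) := by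
  exact (Qaz_jointly_concave_general hα0 hα1 hz).2 (x := (ρ₁, σ₁)) (y := (ρ₂, σ₂)) ⟨hρ₁, hσ₁⟩
    ⟨hρ₂, hσ₂⟩ hlam0 (sub_nonneg.2 hlam1) (add_sub_cancel _ _)
end

section
/- (Variational lower estimate for α > 1.) Let α > 1 and z > 0, and let ρ, σ be n×n positive semidefinite complex matrices such that the support of ρ is contained in the support of σ (i.e., σv = 0 implies ρv = 0). Then for every positive semidefinite n×n complex matrix a: Q_{α,z}(ρ‖σ) ≥ α · Tr((a^{1/2} ρ^{α/z} a^{1/2})^{z/α}) − (α − 1) · Tr((a^{1/2} σ^{(α−1)/z} a^{1/2})^{z/(α−1)}). -/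
open Matrix
open scoped ComplexOrder

/-!
With `X = ρ^(α/2z) σ^((1-α)/2z)` and `Y = σ^((α-1)/2z) a^(1/2)`, the support condition gives
`X Y = ρ^(α/2z) a^(1/2)`, so the three traces are those of powers of the Gram matrices of `X`, `Y`
and `X Y`, that is, sums of powers of singular values. The claim is then the Hölder inequality
`∑ sᵢ(XY)^r / r ≤ ∑ sᵢ(X)^p / p + ∑ sᵢ(Y)^q / q` for `1/p + 1/q = 1/r`, at `p = 2z`,
`q = 2z/(α-1)`, `r = 2z/α`. It follows by Young's inequality from `∑ sᵢ(XY)^r ≤ ∑ (sᵢ(X) sᵢ(Y))^r`,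
which comes from Horn's inequality `∏_{i<k} sᵢ(XY) ≤ ∏_{i<k} sᵢ(X) sᵢ(Y)`: if the partial products
of a decreasing sequence `u` are dominated by those of `v`, then `1 + x ≤ eˣ` gives
`∑_{i<k} (vᵢ/uᵢ - 1) ≥ 0`, and Abel summation against `u` gives `∑ uᵢ ≤ ∑ vᵢ`. Horn's inequality
holds because, by the Cauchy–Binet formula, `T` multiplies the Gram determinant of `k` vectors by at
most `∏_{i<k} sᵢ(T)²`.
-/

section LogMajorization

open Finset

lemma sum_range_mul_nonneg_of_antitone {w c : ℕ → ℝ} {n : ℕ} (hw : Antitone w)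
    (hw0 : ∀ i, 0 ≤ w i) (hc : ∀ k ≤ n, 0 ≤ ∑ i ∈ range k, c i) :
    0 ≤ ∑ i ∈ range n, w i * c i := by
  simp only [← smul_eq_mul]
  rw [sum_range_by_parts]
  have hsteps : ∑ i ∈ range (n - 1), (w (i + 1) - w i) • ∑ j ∈ range (i + 1), c j ≤ 0 :=
    sum_nonpos fun i hi ↦ smul_nonpos_of_nonpos_of_nonneg (sub_nonpos.2 (hw i.le_succ))
      (hc _ (by have := mem_range.1 hi; omega))
  linarith [smul_nonneg (hw0 (n - 1)) (hc n le_rfl)]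

lemma sum_sub_one_nonneg_of_one_le_prod {ι : Type*} {s : Finset ι} {c : ι → ℝ}
    (hc : ∀ i ∈ s, 0 ≤ c i) (h : 1 ≤ ∏ i ∈ s, c i) : 0 ≤ ∑ i ∈ s, (c i - 1) := by
  rw [← Real.one_le_exp_iff, Real.exp_sum]
  exact h.trans (prod_le_prod hc fun i _ ↦ by simpa using Real.add_one_le_exp (c i - 1))

lemma sum_range_le_sum_range_of_prod_le {a b : ℕ → ℝ} {n : ℕ} (ha : Antitone a)
    (ha0 : ∀ i, 0 ≤ a i) (hb0 : ∀ i, 0 ≤ b i)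
    (h : ∀ k ≤ n, ∏ i ∈ range k, a i ≤ ∏ i ∈ range k, b i) :
    ∑ i ∈ range n, a i ≤ ∑ i ∈ range n, b i := by
  induction n with
  | zero => simp
  | succ n ih =>
    obtain hn | hn := (ha0 n).eq_or_lt
    · rw [sum_range_succ, sum_range_succ, ← hn]
      exact add_le_add (ih fun k hk ↦ h k (by omega)) (hb0 n)
    have hpos : ∀ i ∈ range (n + 1), 0 < a i := fun i hi ↦
      hn.trans_le (ha (Nat.lt_succ_iff.1 (mem_range.1 hi)))
    have hratio : ∀ k ≤ n + 1, 0 ≤ ∑ i ∈ range k, (b i / a i - 1) := by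
      intro k hk
      refine sum_sub_one_nonneg_of_one_le_prod (fun i _ ↦ div_nonneg (hb0 i) (ha0 i)) ?_
      rw [prod_div_distrib, one_le_div (prod_pos fun i hi ↦ hpos i (range_mono hk hi))]
      exact h k hk
    have hsum : ∑ i ∈ range (n + 1), a i * (b i / a i - 1) = ∑ i ∈ range (n + 1), (b i - a i) :=
      sum_congr rfl fun i hi ↦ by have := (hpos i hi).ne'; field_simp
    rw [← sub_nonneg, ← sum_sub_distrib, ← hsum]
    exact sum_range_mul_nonneg_of_antitone ha ha0 hratio

lemma prod_le_prod_range_card_of_antitone {d : ℕ → ℝ} (hd : Antitone d) (hd0 : ∀ i, 0 ≤ d i)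
    (s : Finset ℕ) : ∏ i ∈ s, d i ≤ ∏ i ∈ range #s, d i := by
  induction s using Finset.induction_on_max with
  | empty => simp
  | insert m s hm ih =>
    have hcard : #s ≤ m := by
      simpa using card_le_card fun i hi ↦ mem_range.2 (hm i hi)
    rw [prod_insert fun hms ↦ (hm m hms).false, card_insert_of_notMem fun hms ↦ (hm m hms).false,
      prod_range_succ, mul_comm]
    exact mul_le_mul ih (hd hcard) (hd0 m) (prod_nonneg fun i _ ↦ hd0 i)

end LogMajorization

section CauchyBinet

variable {R ι κ : Type*} [CommRing R] [Fintype ι] [Fintype κ] [DecidableEq κ]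

lemma det_mul_eq_sum_prod_mul_det (A : Matrix κ ι R) (B : Matrix ι κ R) :
    (A * B).det = ∑ f : κ → ι, (∏ i, A i (f i)) * (B.submatrix f id).det := by
  have hrows : A * B = fun i ↦ ∑ l, A i l • B l := by
    ext i j
    simp [Matrix.mul_apply]
  classical
  calc (A * B).det
      = ∑ f : κ → ι, detRowAlternating fun i ↦ A i (f i) • B (f i) :=
        hrows ▸ detRowAlternating.toMultilinearMap.map_sum _
    _ = ∑ f : κ → ι, (∏ i, A i (f i)) * (B.submatrix f id).det :=
        Finset.sum_congr rfl fun f _ ↦ detRowAlternating.toMultilinearMap.map_smul_univ _ _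

-- Summing over all maps rather than over `card κ`-subsets of `ι` produces the factorial.
lemma factorial_card_mul_det_mul (A : Matrix κ ι R) (B : Matrix ι κ R) :
    (Fintype.card κ).factorial * (A * B).det =
      ∑ f : κ → ι, (A.submatrix id f).det * (B.submatrix f id).det := by
  have hperm (π : Equiv.Perm κ) :
      ∑ f : κ → ι, (Equiv.Perm.sign π : R) * (∏ i, A (π i) (f i)) * (B.submatrix f id).det =
        (A * B).det := by
    rw [det_mul_eq_sum_prod_mul_det]
    refine Fintype.sum_equiv (π.arrowCongr (Equiv.refl ι)) _ _ fun f ↦ ?_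
    have hminor : (B.submatrix (f ∘ π.symm) id).det =
        Equiv.Perm.sign π * (B.submatrix f id).det := by
      simpa using det_permute π.symm (B.submatrix f id)
    have hprod : ∏ i, A i (f (π.symm i)) = ∏ i, A (π i) (f i) := by
      simpa using (Equiv.prod_comp π fun i ↦ A i (f (π.symm i))).symm
    change _ = (∏ i, A i (f (π.symm i))) * (B.submatrix (f ∘ π.symm) id).det
    rw [hminor, hprod]
    ring
  calc ((Fintype.card κ).factorial : R) * (A * B).det
      = ∑ _π : Equiv.Perm κ, (A * B).det := by simp [Fintype.card_perm]
    _ = ∑ π : Equiv.Perm κ, ∑ f : κ → ι,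
          (Equiv.Perm.sign π : R) * (∏ i, A (π i) (f i)) * (B.submatrix f id).det := by
        simp only [hperm]
    _ = ∑ f : κ → ι, (A.submatrix id f).det * (B.submatrix f id).det := by
        rw [Finset.sum_comm]
        simp only [← Finset.sum_mul, det_apply', submatrix_apply, id_eq]

end CauchyBinet

section Gram

variable {𝕜 ι κ : Type*} [RCLike 𝕜] [Fintype ι] [DecidableEq ι] [Fintype κ] [DecidableEq κ]

lemma factorial_card_mul_re_det_conjTranspose_mul_diagonal_mul (G : Matrix ι κ 𝕜) (d : ι → ℝ) :
    (Fintype.card κ).factorial * RCLike.re (Gᴴ * diagonal (fun l ↦ (d l : 𝕜)) * G).det =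
      ∑ f : κ → ι, (∏ i, d (f i)) * ‖(G.submatrix f id).det‖ ^ 2 := by
  have hminor (f : κ → ι) : ((Gᴴ * diagonal (fun l ↦ (d l : 𝕜))).submatrix id f).det =
      ((∏ i, d (f i) : ℝ) : 𝕜) * star (G.submatrix f id).det := by
    have : (Gᴴ * diagonal (fun l ↦ (d l : 𝕜))).submatrix id f =
        (G.submatrix f id)ᴴ * diagonal (fun i ↦ (d (f i) : 𝕜)) := by
      ext i j
      simp
    rw [this, det_mul, det_conjTranspose, det_diagonal, mul_comm, RCLike.ofReal_prod]
  have h := congrArg RCLike.re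
    (factorial_card_mul_det_mul (Gᴴ * diagonal (fun l ↦ (d l : 𝕜))) G)
  simp only [hminor, mul_assoc, RCLike.star_def, RCLike.conj_mul, map_sum, RCLike.re_ofReal_mul,
    ← RCLike.ofReal_pow, RCLike.ofReal_re] at h
  rw [← h, ← RCLike.re_ofReal_mul, RCLike.ofReal_natCast]

lemma re_det_conjTranspose_mul_diagonal_mul_le (G : Matrix ι κ 𝕜) {d : ι → ℝ} {c : ℝ}
    (hd : ∀ f : κ → ι, Function.Injective f → ∏ i, d (f i) ≤ c) :
    RCLike.re (Gᴴ * diagonal (fun l ↦ (d l : 𝕜)) * G).det ≤ c * RCLike.re (Gᴴ * G).det := by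
  have hfac : (0 : ℝ) < (Fintype.card κ).factorial := mod_cast Nat.factorial_pos _
  have hone := factorial_card_mul_re_det_conjTranspose_mul_diagonal_mul G (fun _ ↦ 1)
  simp only [RCLike.ofReal_one, diagonal_one, Matrix.mul_one, Finset.prod_const_one,
    one_mul] at hone
  rw [← mul_le_mul_iff_right₀ hfac, factorial_card_mul_re_det_conjTranspose_mul_diagonal_mul,
    mul_left_comm, hone, Finset.mul_sum]
  refine Finset.sum_le_sum fun f _ ↦ ?_
  by_cases hf : Function.Injective f
  · exact mul_le_mul_of_nonneg_right (hd f hf) (sq_nonneg _)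
  · obtain ⟨i, j, hij, hne⟩ := Function.not_injective_iff.1 hf
    have hdet : (G.submatrix f id).det = 0 :=
      det_zero_of_row_eq hne (by ext; simp [hij])
    simp [hdet]

end Gram

section SingularValues

variable {𝕜 E F H : Type*} [RCLike 𝕜]
  [NormedAddCommGroup E] [InnerProductSpace 𝕜 E] [FiniteDimensional 𝕜 E]
  [NormedAddCommGroup F] [InnerProductSpace 𝕜 F] [FiniteDimensional 𝕜 F]
  [NormedAddCommGroup H] [InnerProductSpace 𝕜 H] [FiniteDimensional 𝕜 H]

/-- An orthonormal basis of right singular vectors of `T`, in the order of `T.singularValues`. -/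
noncomputable def rightSingularBasis (T : E →ₗ[𝕜] F) :
    OrthonormalBasis (Fin (Module.finrank 𝕜 E)) 𝕜 E :=
  T.isSymmetric_adjoint_comp_self.eigenvectorBasis rfl

lemma gram_comp_eq_conjTranspose_mul_diagonal_mul {κ : Type*} (T : E →ₗ[𝕜] F) (v : κ → E) :
    letI G : Matrix (Fin (Module.finrank 𝕜 E)) κ 𝕜 :=
      of fun l j ↦ (rightSingularBasis T).repr (v j) l
    gram 𝕜 (T ∘ v) = Gᴴ * diagonal (fun l : Fin (Module.finrank 𝕜 E) ↦
      ((T.singularValues l ^ 2 : ℝ) : 𝕜)) * G := by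
  ext i j
  calc inner 𝕜 (T (v i)) (T (v j))
      = inner 𝕜 ((rightSingularBasis T).repr (v i))
          ((rightSingularBasis T).repr ((T.adjoint ∘ₗ T) (v j))) := by
        rw [LinearIsometryEquiv.inner_map_map, LinearMap.comp_apply,
          LinearMap.adjoint_inner_right]
    _ = _ := by
        rw [PiLp.inner_apply, Matrix.mul_apply]
        refine Finset.sum_congr rfl fun l _ ↦ ?_
        rw [rightSingularBasis, LinearMap.IsSymmetric.eigenvectorBasis_apply_self_apply,
          RCLike.inner_apply', mul_diagonal, conjTranspose_apply, T.sq_singularValues_fin rfl]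
        simp only [of_apply, RCLike.star_def, mul_assoc]

lemma gram_comp_rightSingularBasis (T : E →ₗ[𝕜] F) :
    gram 𝕜 (T ∘ rightSingularBasis T) =
      diagonal fun l : Fin (Module.finrank 𝕜 E) ↦ ((T.singularValues l ^ 2 : ℝ) : 𝕜) := by
  rw [gram_comp_eq_conjTranspose_mul_diagonal_mul]
  have hG : (of fun l j ↦ (rightSingularBasis T).repr (rightSingularBasis T j) l) =
      (1 : Matrix (Fin (Module.finrank 𝕜 E)) (Fin (Module.finrank 𝕜 E)) 𝕜) := by
    ext l j
    simp [Matrix.one_apply]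
  rw [hG, conjTranspose_one, Matrix.one_mul, Matrix.mul_one]

lemma re_det_gram_comp_le {κ : Type*} [Fintype κ] [DecidableEq κ] (T : E →ₗ[𝕜] F) (v : κ → E) :
    RCLike.re (gram 𝕜 (T ∘ v)).det ≤
      (∏ i ∈ Finset.range (Fintype.card κ), T.singularValues i ^ 2) *
        RCLike.re (gram 𝕜 v).det := by
  rw [gram_comp_eq_conjTranspose_mul_diagonal_mul,
    gram_eq_conjTranspose_mul (rightSingularBasis T)]
  refine re_det_conjTranspose_mul_diagonal_mul_le _ fun f hf ↦ ?_
  simpa using prod_le_prod_range_card_of_antitone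
    (fun i j hij ↦ pow_le_pow_left₀ (T.singularValues_nonneg j) (T.singularValues_antitone hij) 2)
    (fun i ↦ sq_nonneg _) (Finset.univ.map ⟨fun i ↦ (f i : ℕ), Fin.val_injective.comp hf⟩)

-- Horn's inequality: test `S ∘ₗ T` on its top `k` right singular vectors, whose Gram determinants
-- before and after applying `S ∘ₗ T` are explicit, and bound the effect of `T` and `S` in turn.
lemma prod_singularValues_comp_le (S : F →ₗ[𝕜] H) (T : E →ₗ[𝕜] F) (k : ℕ) :
    ∏ i ∈ Finset.range k, (S ∘ₗ T).singularValues i ≤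
      ∏ i ∈ Finset.range k, (S.singularValues i * T.singularValues i) := by
  have hnonneg : 0 ≤ ∏ i ∈ Finset.range k, (S.singularValues i * T.singularValues i) :=
    Finset.prod_nonneg fun i _ ↦
      mul_nonneg (S.singularValues_nonneg i) (T.singularValues_nonneg i)
  obtain hk | hk := lt_or_ge (Module.finrank 𝕜 E) k
  · rwa [Finset.prod_eq_zero (Finset.mem_range.2 hk)
      ((S ∘ₗ T).singularValues_of_finrank_le le_rfl)]
  let v : Fin k → E := rightSingularBasis (S ∘ₗ T) ∘ Fin.castLE hk
  have hv : gram 𝕜 v = 1 := gram_eq_one_iff_orthonormal.2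
    ((rightSingularBasis (S ∘ₗ T)).orthonormal.comp _ (Fin.castLE_injective hk))
  have hSTv : gram 𝕜 (S ∘ T ∘ v) =
      diagonal fun i : Fin k ↦ (((S ∘ₗ T).singularValues i ^ 2 : ℝ) : 𝕜) := by
    change (gram 𝕜 ((S ∘ₗ T) ∘ rightSingularBasis (S ∘ₗ T))).submatrix (Fin.castLE hk)
      (Fin.castLE hk) = _
    rw [gram_comp_rightSingularBasis, submatrix_diagonal _ _ (Fin.castLE_injective hk)]
    rfl
  have hT := re_det_gram_comp_le T v
  have hS := re_det_gram_comp_le S (T ∘ v)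
  rw [hv, det_one, RCLike.one_re, mul_one, Fintype.card_fin] at hT
  rw [hSTv, det_diagonal, ← RCLike.ofReal_prod, RCLike.ofReal_re, Fintype.card_fin,
    Fin.prod_univ_eq_prod_range (fun i ↦ (S ∘ₗ T).singularValues i ^ 2)] at hS
  refine le_of_sq_le_sq ?_ hnonneg
  rw [← Finset.prod_pow, ← Finset.prod_pow]
  simp only [mul_pow, Finset.prod_mul_distrib]
  exact hS.trans (mul_le_mul_of_nonneg_left hT (Finset.prod_nonneg fun i _ ↦ sq_nonneg _))

end SingularValues

section Holder

lemma mul_rpow_div_le_of_holderTriple {p q r a b : ℝ} (h : p.HolderTriple q r) (ha : 0 ≤ a)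
    (hb : 0 ≤ b) : (a * b) ^ r / r ≤ a ^ p / p + b ^ q / q := by
  have hr := h.pos'
  have young := Real.young_inequality_of_nonneg (Real.rpow_nonneg ha r) (Real.rpow_nonneg hb r)
    h.holderConjugate_div_div
  rw [← Real.rpow_mul ha, ← Real.rpow_mul hb, mul_div_cancel₀ _ hr.ne', mul_div_cancel₀ _ hr.ne',
    ← Real.mul_rpow ha hb] at young
  calc (a * b) ^ r / r ≤ (a ^ p / (p / r) + b ^ q / (q / r)) / r := by gcongr
    _ = a ^ p / p + b ^ q / q := by field_simp

variable {𝕜 E F H : Type*} [RCLike 𝕜]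
  [NormedAddCommGroup E] [InnerProductSpace 𝕜 E] [FiniteDimensional 𝕜 E]
  [NormedAddCommGroup F] [InnerProductSpace 𝕜 F] [FiniteDimensional 𝕜 F]
  [NormedAddCommGroup H] [InnerProductSpace 𝕜 H] [FiniteDimensional 𝕜 H]

lemma sum_rpow_singularValues_comp_le (S : F →ₗ[𝕜] H) (T : E →ₗ[𝕜] F) {r : ℝ} (hr : 0 ≤ r)
    (n : ℕ) : ∑ i ∈ Finset.range n, (S ∘ₗ T).singularValues i ^ r ≤
      ∑ i ∈ Finset.range n, (S.singularValues i * T.singularValues i) ^ r := by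
  have hST0 := (S ∘ₗ T).singularValues_nonneg
  have hmul0 (i : ℕ) : 0 ≤ S.singularValues i * T.singularValues i :=
    mul_nonneg (S.singularValues_nonneg i) (T.singularValues_nonneg i)
  refine sum_range_le_sum_range_of_prod_le
    (fun i j hij ↦ Real.rpow_le_rpow (hST0 j) ((S ∘ₗ T).singularValues_antitone hij) hr)
    (fun i ↦ Real.rpow_nonneg (hST0 i) r) (fun i ↦ Real.rpow_nonneg (hmul0 i) r) fun k _ ↦ ?_
  rw [Real.finsetProd_rpow _ _ fun i _ ↦ hST0 i, Real.finsetProd_rpow _ _ fun i _ ↦ hmul0 i]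
  exact Real.rpow_le_rpow (Finset.prod_nonneg fun i _ ↦ hST0 i)
    (prod_singularValues_comp_le S T k) hr

lemma sum_rpow_singularValues_comp_div_le {p q r : ℝ} (h : p.HolderTriple q r) (S : F →ₗ[𝕜] H)
    (T : E →ₗ[𝕜] F) (n : ℕ) :
    (∑ i ∈ Finset.range n, (S ∘ₗ T).singularValues i ^ r) / r ≤
      (∑ i ∈ Finset.range n, S.singularValues i ^ p) / p +
        (∑ i ∈ Finset.range n, T.singularValues i ^ q) / q := by
  calc (∑ i ∈ Finset.range n, (S ∘ₗ T).singularValues i ^ r) / r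
      ≤ (∑ i ∈ Finset.range n, (S.singularValues i * T.singularValues i) ^ r) / r :=
        div_le_div_of_nonneg_right (sum_rpow_singularValues_comp_le S T h.nonneg' n) h.nonneg'
    _ ≤ ∑ i ∈ Finset.range n, (S.singularValues i ^ p / p + T.singularValues i ^ q / q) := by
        rw [Finset.sum_div]
        exact Finset.sum_le_sum fun i _ ↦ mul_rpow_div_le_of_holderTriple h
          (S.singularValues_nonneg i) (T.singularValues_nonneg i)
    _ = _ := by rw [Finset.sum_add_distrib, Finset.sum_div, Finset.sum_div]

end Holder

section MatrixPower

variable {n m l : Type*} [Fintype n] [DecidableEq n]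

lemma mpow_eq_cfc (A : Matrix n n ℂ) (t : ℝ) : mpow A t = cfc (fun x : ℝ ↦ x ^ t) A := by
  by_cases hA : A.IsHermitian
  · rw [mpow, dif_pos hA, hA.cfc_eq, IsHermitian.cfc, Unitary.conjStarAlgAut_apply]
    rfl
  · rw [mpow, dif_neg hA, cfc_apply_of_not_predicate (p := IsSelfAdjoint) A hA]

lemma conjTranspose_mpow (A : Matrix n n ℂ) (t : ℝ) : (mpow A t)ᴴ = mpow A t := by
  rw [mpow_eq_cfc]
  exact cfc_predicate (p := IsSelfAdjoint) _ A

lemma mpow_one {A : Matrix n n ℂ} (hA : A.IsHermitian) : mpow A 1 = A := by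
  simp only [mpow_eq_cfc, Real.rpow_one]
  exact cfc_id' ℝ A hA

lemma mpow_add {A : Matrix n n ℂ} (hA : A.PosSemidef) {s t : ℝ} (hst : s + t ≠ 0) :
    mpow A (s + t) = mpow A s * mpow A t := by
  have hcont (f : ℝ → ℝ) : ContinuousOn f (spectrum ℝ A) := A.finite_real_spectrum.continuousOn f
  simp only [mpow_eq_cfc]
  rw [← cfc_mul _ _ A (hcont _) (hcont _)]
  refine cfc_congr fun x hx ↦ Real.rpow_add' ?_ hst
  rw [hA.isHermitian.spectrum_real_eq_range_eigenvalues] at hx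
  obtain ⟨i, rfl⟩ := hx
  exact hA.eigenvalues_nonneg i

lemma mpow_mulVec_eq_zero_iff {A : Matrix n n ℂ} (hA : A.PosSemidef) {t : ℝ} (ht : t ≠ 0)
    (v : n → ℂ) : mpow A t *ᵥ v = 0 ↔ A *ᵥ v = 0 := by
  have hleft : mpow A (1 - t) * mpow A t = A := by
    rw [← mpow_add hA (by simp), sub_add_cancel, mpow_one hA.isHermitian]
  have hright : mpow A (t - 1) * A = mpow A t := by
    have := mpow_add hA (s := t - 1) (t := 1) (by simpa using ht)
    rwa [sub_add_cancel, mpow_one hA.isHermitian, eq_comm] at this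
  constructor <;> intro h
  · rw [← hleft, ← mulVec_mulVec, h, mulVec_zero]
  · rw [← hright, ← mulVec_mulVec, h, mulVec_zero]

lemma mul_mpow_neg_mul_mpow_of_ker_le {M : Matrix m n ℂ} {A : Matrix n n ℂ}
    (hA : A.PosSemidef) (hker : ∀ v, A *ᵥ v = 0 → M *ᵥ v = 0) {s : ℝ} (hs : s ≠ 0) :
    M * mpow A (-s) * mpow A s = M := by
  have hproj : mpow A s * (mpow A (-s) * mpow A s) = mpow A s := by
    have hcomm : Commute (mpow A s) (mpow A (-s)) := by
      simpa only [mpow_eq_cfc] using cfc_commute_cfc _ _ A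
    rw [← Matrix.mul_assoc, hcomm.eq, Matrix.mul_assoc, ← mpow_add hA (by simpa using hs),
      ← mpow_add hA (by simpa using hs), neg_add_cancel_left]
  refine ext_iff_mulVec.2 fun v ↦ ?_
  have hv : mpow A s *ᵥ (v - (mpow A (-s) * mpow A s) *ᵥ v) = 0 := by
    rw [mulVec_sub, mulVec_mulVec, hproj, sub_self]
  have hMv := hker _ ((mpow_mulVec_eq_zero_iff hA hs _).1 hv)
  rw [mulVec_sub, mulVec_mulVec, ← Matrix.mul_assoc, sub_eq_zero] at hMv
  exact hMv.symm

lemma re_trace_mpow {A : Matrix n n ℂ} (hA : A.IsHermitian) (t : ℝ) :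
    (mpow A t).trace.re = ∑ i, hA.eigenvalues i ^ t := by
  rw [mpow, dif_pos hA, trace_mul_cycle, Unitary.coe_star_mul_self, Matrix.one_mul, trace_diagonal]
  simp

variable [Fintype m]

lemma eigenvalues₀_conjTranspose_mul_self (X : Matrix m n ℂ) (i : Fin (Fintype.card n)) :
    (isHermitian_conjTranspose_mul_self X).eigenvalues₀ i =
      (toEuclideanLin X).singularValues i ^ 2 := by
  classical
  have hcomp : toEuclideanLin (Xᴴ * X) = (toEuclideanLin X).adjoint ∘ₗ toEuclideanLin X := by
    rw [toLpLin_mul 2 2 2, toEuclideanLin_conjTranspose_eq_adjoint]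
  -- `IsSymmetric.eigenvalues` depends on the operator through a proof, so it cannot be rewritten.
  have hcongr {S : EuclideanSpace ℂ n →ₗ[ℂ] EuclideanSpace ℂ n} (hS : S.IsSymmetric)
      (h : S = (toEuclideanLin X).adjoint ∘ₗ toEuclideanLin X) :
      hS.eigenvalues finrank_euclideanSpace i = (toEuclideanLin X).singularValues i ^ 2 := by
    subst h
    exact ((toEuclideanLin X).sq_singularValues_fin finrank_euclideanSpace i).symm
  exact hcongr _ hcomp

lemma re_trace_mpow_conjTranspose_mul_self (X : Matrix m n ℂ) {t : ℝ} (ht : t ≠ 0) {N : ℕ}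
    (hN : Fintype.card n ≤ N) :
    (mpow (Xᴴ * X) t).trace.re =
      ∑ i ∈ Finset.range N, (toEuclideanLin X).singularValues i ^ (2 * t) := by
  have hsq (i : ℕ) : ((toEuclideanLin X).singularValues i ^ 2) ^ t =
      (toEuclideanLin X).singularValues i ^ (2 * t) := by
    rw [← Real.rpow_natCast_mul ((toEuclideanLin X).singularValues_nonneg i), Nat.cast_ofNat]
  have htail : ∀ i ∈ Finset.range N, i ∉ Finset.range (Fintype.card n) →
      (toEuclideanLin X).singularValues i ^ (2 * t) = 0 := by
    intro i _ hi
    rw [(toEuclideanLin X).singularValues_of_finrank_le (by simpa using hi),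
      Real.zero_rpow (by simpa using ht)]
  calc (mpow (Xᴴ * X) t).trace.re
      = ∑ i, (isHermitian_conjTranspose_mul_self X).eigenvalues₀ i ^ t := by
        rw [re_trace_mpow (isHermitian_conjTranspose_mul_self X)]
        exact Equiv.sum_comp _ fun i ↦ (isHermitian_conjTranspose_mul_self X).eigenvalues₀ i ^ t
    _ = ∑ i ∈ Finset.range (Fintype.card n), (toEuclideanLin X).singularValues i ^ (2 * t) := by
        simp only [eigenvalues₀_conjTranspose_mul_self, hsq]
        exact Fin.sum_univ_eq_sum_range
          (fun i ↦ (toEuclideanLin X).singularValues i ^ (2 * t)) _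
    _ = _ := Finset.sum_subset (Finset.range_mono hN) htail

lemma re_trace_mpow_mul_le_of_holderTriple [Fintype l] [DecidableEq m] {p q r : ℝ}
    (h : p.HolderTriple q r) (X : Matrix l m ℂ) (Y : Matrix m n ℂ) :
    (mpow ((X * Y)ᴴ * (X * Y)) r).trace.re / r ≤
      (mpow (Xᴴ * X) p).trace.re / p + (mpow (Yᴴ * Y) q).trace.re / q := by
  have h2 : (2 * p).HolderTriple (2 * q) (2 * r) :=
    ⟨by rw [mul_inv, mul_inv, mul_inv, ← mul_add, h.inv_add_inv_eq_inv], by linarith [h.pos],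
      by linarith [h.symm.pos]⟩
  have hsum := sum_rpow_singularValues_comp_div_le h2 (toEuclideanLin X) (toEuclideanLin Y)
    (Fintype.card m + Fintype.card n)
  rw [← toLpLin_mul 2 2 2, ← re_trace_mpow_conjTranspose_mul_self _ h.pos'.ne' le_add_self,
    ← re_trace_mpow_conjTranspose_mul_self _ h.pos.ne' le_self_add,
    ← re_trace_mpow_conjTranspose_mul_self _ h.symm.pos.ne' le_add_self] at hsum
  simp only [mul_comm (2 : ℝ), ← div_div, ← add_div] at hsum
  exact (div_le_div_iff_of_pos_right two_pos).1 hsum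

end MatrixPower

theorem Qaz_variational_ge_general {ι κ : Type*} [Fintype ι] [DecidableEq ι] [Fintype κ]
    [DecidableEq κ] {α z : ℝ} (hα : 1 < α) (hz : 0 < z) {ρ σ : Matrix ι ι ℂ}
    (hρ : ρ.PosSemidef) (hσ : σ.PosSemidef) (hsupp : ∀ v, σ *ᵥ v = 0 → ρ *ᵥ v = 0)
    (B : Matrix ι κ ℂ) :
    α * (mpow (Bᴴ * mpow ρ (α / z) * B) (z / α)).trace.re
      - (α - 1) * (mpow (Bᴴ * mpow σ ((α - 1) / z) * B) (z / (α - 1))).trace.re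
      ≤ Qaz α z ρ σ := by
  have : 0 < α - 1 := sub_pos.2 hα
  have : 0 < α := one_pos.trans hα
  let s := (α - 1) / (2 * z)
  have hs : s ≠ 0 := by positivity
  have ht : α / (2 * z) ≠ 0 := by positivity
  have hρt : mpow ρ (α / z) = mpow ρ (α / (2 * z)) * mpow ρ (α / (2 * z)) := by
    rw [← mpow_add hρ (by positivity)]; congr 1; ring
  have hσs : mpow σ ((α - 1) / z) = mpow σ s * mpow σ s := by
    rw [← mpow_add hσ (by positivity)]; congr 1; ring
  let X := mpow ρ (α / (2 * z)) * mpow σ (-s)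
  let Y := mpow σ s * B
  have hXY : X * Y = mpow ρ (α / (2 * z)) * B := by
    rw [← Matrix.mul_assoc, mul_mpow_neg_mul_mpow_of_ker_le hσ
      (fun v hv ↦ (mpow_mulVec_eq_zero_iff hρ ht v).2 (hsupp v hv)) hs]
  have hQ : Qaz α z ρ σ = (mpow (Xᴴ * X) z).trace.re := by
    have hexp : (1 - α) / (2 * z) = -s := by simp only [s]; ring
    simp only [Qaz, hexp, hρt, X, conjTranspose_mul, conjTranspose_mpow, Matrix.mul_assoc]
  have hYY : Yᴴ * Y = Bᴴ * mpow σ ((α - 1) / z) * B := by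
    simp only [hσs, Y, conjTranspose_mul, conjTranspose_mpow, Matrix.mul_assoc]
  have hXYXY : (X * Y)ᴴ * (X * Y) = Bᴴ * mpow ρ (α / z) * B := by
    simp only [hXY, hρt, conjTranspose_mul, conjTranspose_mpow, Matrix.mul_assoc]
  have hHolder : z.HolderTriple (z / (α - 1)) (z / α) :=
    ⟨by field_simp; ring, hz, by positivity⟩
  have holder := re_trace_mpow_mul_le_of_holderTriple hHolder X Y
  rw [hXYXY, hYY, ← hQ] at holder
  field_simp at holder
  linarith

/-- Variational lower estimate for `α > 1`, `z > 0`: if `supp ρ ⊆ supp σ`, then for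
every positive semidefinite `a`,
`Q_{α,z}(ρ‖σ) ≥ α Tr((a^{1/2} ρ^{α/z} a^{1/2})^{z/α})
              − (α−1) Tr((a^{1/2} σ^{(α−1)/z} a^{1/2})^{z/(α−1)})`. -/
theorem Qaz_variational_ge (n : ℕ) (α z : ℝ) (hα : 1 < α) (hz : 0 < z)
    (ρ σ : Matrix (Fin n) (Fin n) ℂ) (hρ : ρ.PosSemidef) (hσ : σ.PosSemidef)
    (hsupp : ∀ v : Fin n → ℂ, σ *ᵥ v = 0 → ρ *ᵥ v = 0)
    (a : Matrix (Fin n) (Fin n) ℂ) (ha : a.PosSemidef) :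
    α * ((mpow (mpow a (1 / 2) * mpow ρ (α / z) * mpow a (1 / 2)) (z / α)).trace).re
      - (α - 1) * ((mpow (mpow a (1 / 2) * mpow σ ((α - 1) / z) * mpow a (1 / 2))
          (z / (α - 1))).trace).re
      ≤ Qaz α z ρ σ := by
  simpa [conjTranspose_mpow] using Qaz_variational_ge_general hα hz hρ hσ hsupp (mpow a (1 / 2))
end
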